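/- arXiv:1901.01993 — 5 statements merged into one kernel-verified Lean document; each statement's English description precedes it below -/
import Mathlib

section
/- (Berkovich–Garvan) Let L > 0 and let m, r be integers with 1 < r < m − 1. In the ring of formal power series over ℚ in one variable q, consider the difference D = (∏_{j=0}^{L−1} (1 − q^{1+jm})(1 − q^{m−1+jm}))⁻¹ − (∏_{j=0}^{L−1} (1 − q^{r+jm})(1 − q^{m−r+jm}))⁻¹. Then every coefficient of D is nonnegative if and only if r does not divide m − r and m − r does not divide r. -/
open PowerSeries

/-!
The coefficients of the two inverse products count pairs `(u, v)` of multisets of indices, with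
weights `|u| + (m - 1) |v| + w(u) + w(v)` and `r |u| + (m - r) |v| + w(u) + w(v)` respectively,
where `w` gives the index `j` the weight `j m`, so that copies of the index `0` are weightless.

Put `s = m - r`, say with `r ≤ s`. Suppose `r ∤ s`. Sort a pair with `e = |u| - |v|` so that the
larger multiset comes first, then add copies of `0` to that one until the difference of the sizes is
`r e` if `e ≥ 0` and `-s e` if `e < 0`. This turns the second weight into the first, and pairs can
collide only if `e < 0` and `r ∣ s e`. In that case one copy of `0` also goes to the smaller
multiset, and the difference becomes `-s e - (r + s)`. Divisibility of the new difference by `r`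
and `s` then shows that it determines `e`, so the map is injective.

If `r ∣ s`, then `s` has the two representations `s` and `r + ⋯ + r` of the second kind, but only
the representation `1 + ⋯ + 1` of the first kind.
-/

namespace BerkovichGarvan

section Representations

variable {ι : Type*}

/-- The number of representations `n = ∑ i, c i * x i` with finitely supported multiplicities
`x i ∈ ℕ`, i.e. of partitions of `n` whose parts carry labels in `ι`, the part labelled `i` having
size `c i`. It is the junk value `0` if there are infinitely many. -/
noncomputable def numReps (c : ι → ℕ) (n : ℕ) : ℕ :=
  {x : ι →₀ ℕ | Finsupp.weight c x = n}.ncard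

theorem expand_mk_one_mul_one_sub_X_pow {R : Type*} [CommRing R] {c : ℕ} (hc : c ≠ 0) :
    expand c hc (mk 1 : R⟦X⟧) * (1 - X ^ c) = 1 := by
  rw [← expand_X c hc, ← map_one (expand c hc), ← map_sub, ← map_mul, mk_one_mul_one_sub_eq_one]

theorem inv_prod_one_sub_X_pow {K : Type*} [Field K] [Fintype ι] {c : ι → ℕ}
    (hc : ∀ i, c i ≠ 0) :
    (∏ i, (1 - (X : K⟦X⟧) ^ c i))⁻¹ = ∏ i, expand (c i) (hc i) (mk 1) := by
  refine ((PowerSeries.eq_inv_iff_mul_eq_one ?_).mpr ?_).symm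
  · simp [hc]
  · rw [← Finset.prod_mul_distrib]
    exact Finset.prod_eq_one fun i _ ↦ expand_mk_one_mul_one_sub_X_pow (hc i)

open Classical in
theorem numReps_eq_card_filter_dvd [Fintype ι] {c : ι → ℕ} (hc : ∀ i, c i ≠ 0) (n : ℕ) :
    numReps c n =
      ((Finset.univ.finsuppAntidiag n).filter fun l : ι →₀ ℕ ↦ ∀ i, c i ∣ l i).card := by
  rw [numReps, ← Set.ncard_coe_finset]
  refine Set.ncard_congr (fun x _ ↦ Finsupp.equivFunOnFinite.symm fun i ↦ x i * c i) ?_ ?_ ?_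
  · intro x hx
    simpa [Finsupp.weight_eq_sum] using hx
  · intro x y _ _ hxy
    ext i
    exact Nat.eq_of_mul_eq_mul_right (Nat.pos_of_ne_zero (hc i)) (DFunLike.congr_fun hxy i)
  · intro l hl
    simp only [Finset.coe_filter, Finset.mem_finsuppAntidiag, Set.mem_ofPred_eq] at hl
    obtain ⟨⟨hsum, -⟩, hdvd⟩ := hl
    refine ⟨Finsupp.equivFunOnFinite.symm fun i ↦ l i / c i, ?_, ?_⟩
    · simpa [Finsupp.weight_eq_sum, Nat.div_mul_cancel (hdvd _)] using hsum
    · ext i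
      simp [Nat.div_mul_cancel (hdvd i)]

theorem coeff_inv_prod_one_sub_X_pow {K : Type*} [Field K] [Fintype ι] {c : ι → ℕ}
    (hc : ∀ i, c i ≠ 0) (n : ℕ) :
    coeff n (∏ i, (1 - (X : K⟦X⟧) ^ c i))⁻¹ = (numReps c n : K) := by
  classical
  rw [inv_prod_one_sub_X_pow hc, coeff_prod, numReps_eq_card_filter_dvd hc]
  simp [coeff_expand, Finset.prod_ite_zero, Finset.sum_boole]

theorem one_lt_numReps_of_dvd [Finite ι] {c : ι → ℕ} (hc : ∀ i, c i ≠ 0) {i j : ι} (hij : i ≠ j)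
    (hdvd : c i ∣ c j) : 1 < numReps c (c j) := by
  refine (Set.one_lt_ncard (Finsupp.finite_of_nat_weight_eq c hc _)).mpr
    ⟨Finsupp.single i (c j / c i), ?_, Finsupp.single j 1, ?_, fun h ↦ ?_⟩
  · simp [Finsupp.weight_single, Nat.div_mul_cancel hdvd]
  · simp [Finsupp.weight_single]
  · simpa [hij] using DFunLike.congr_fun h j

theorem numReps_le_one_of_forall_lt {c : ι → ℕ} {i : ι} (hi : c i ≠ 0) {n : ℕ}
    (hc : ∀ j, j ≠ i → n < c j) : numReps c n ≤ 1 := by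
  have eq_single {x : ι →₀ ℕ} (hx : Finsupp.weight c x = n) : x = Finsupp.single i (x i) := by
    refine Finsupp.eq_single_iff.mpr ⟨fun j hj ↦ ?_, rfl⟩
    by_contra hji
    have hle := Finsupp.le_weight_of_ne_zero' c (Finsupp.mem_support_iff.mp hj)
    exact (hc j (by simpa using hji)).not_ge (hx ▸ hle)
  have hsub : {x : ι →₀ ℕ | Finsupp.weight c x = n}.Subsingleton := by
    intro x hx y hy
    have hxy : Finsupp.weight c x = Finsupp.weight c y := hx.trans hy.symm
    rw [eq_single hx, eq_single hy, Finsupp.weight_single, Finsupp.weight_single] at hxy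
    rw [eq_single hx, eq_single hy, Nat.eq_of_mul_eq_mul_right (Nat.pos_of_ne_zero hi) hxy]
  exact (Set.ncard_le_one hsub.finite).mpr hsub

end Representations

section Exchange

/-- For a pair `(u, v)` with `e = |u| - |v|`, the excess of `r |u| + s |v|` over
`(r + s) * min |u| |v|`. -/
def surplus (r s : ℕ) (e : ℤ) : ℤ :=
  if 0 ≤ e then r * e else -(s * e)

/-- The number of copies of the weightless element that `exchange` adds to the second component of
a pair with difference `e`; it keeps apart the differences `e < 0` and `e' ≥ 0` with equal surplus
`-s e = r e'`. -/
def carry (r s : ℕ) (e : ℤ) : ℕ :=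
  if e < 0 ∧ (r : ℤ) ∣ s * e then 1 else 0

/-- The difference of the degrees of the two components of the image under `exchange` of a pair with
difference `e`. -/
def imageExcess (r s : ℕ) (e : ℤ) : ℤ :=
  surplus r s e - (r + s) * carry r s e

theorem carry_of_nonneg {r s : ℕ} {e : ℤ} (he : 0 ≤ e) : carry r s e = 0 :=
  if_neg fun h ↦ he.not_gt h.1

theorem imageExcess_of_nonneg {r s : ℕ} {e : ℤ} (he : 0 ≤ e) : imageExcess r s e = r * e := by
  rw [imageExcess, surplus, if_pos he, carry_of_nonneg he, Nat.cast_zero, mul_zero, sub_zero]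

theorem imageExcess_of_neg {r s : ℕ} {e : ℤ} (he : e < 0) :
    imageExcess r s e = -(s * e) - (r + s) * carry r s e := by
  rw [imageExcess, surplus, if_neg he.not_ge]

theorem dvd_imageExcess_iff {r s : ℕ} (hrs : ¬ r ∣ s) (e : ℤ) :
    (r : ℤ) ∣ imageExcess r s e ↔ 0 ≤ e := by
  rcases le_or_gt 0 e with he | he
  · simp [imageExcess_of_nonneg he, he]
  · rw [imageExcess_of_neg he, carry]
    by_cases hdvd : (r : ℤ) ∣ s * e
    · simp [he, hdvd, dvd_sub_right, Int.natCast_dvd_natCast, hrs]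
    · simp [he, hdvd]

theorem carry_eq_of_imageExcess_eq {r s : ℕ} (hsr : ¬ s ∣ r) {d e : ℤ} (hd : d < 0) (he : e < 0)
    (h : imageExcess r s d = imageExcess r s e) : carry r s d = carry r s e := by
  have not_dvd : ¬ (s : ℤ) ∣ r + s := by
    rwa [dvd_add_self_right, Int.natCast_dvd_natCast]
  rw [imageExcess_of_neg hd, imageExcess_of_neg he] at h
  unfold carry at h ⊢
  split_ifs at h ⊢
  · rfl
  · exact absurd ⟨e - d, by linear_combination -h⟩ not_dvd
  · exact absurd ⟨d - e, by linear_combination h⟩ not_dvd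
  · rfl

theorem imageExcess_injective {r s : ℕ} (hrs : ¬ r ∣ s) (hsr : ¬ s ∣ r) :
    Function.Injective (imageExcess r s) := by
  have hr : r ≠ 0 := by rintro rfl; exact hsr (dvd_zero s)
  have hs : s ≠ 0 := by rintro rfl; exact hrs (dvd_zero r)
  intro d e h
  have same_sign : 0 ≤ d ↔ 0 ≤ e := by
    rw [← dvd_imageExcess_iff hrs, h, dvd_imageExcess_iff hrs]
  rcases le_or_gt 0 e with he | he
  · simpa [imageExcess_of_nonneg (same_sign.mpr he), imageExcess_of_nonneg he, hr] using h
  · have hd : d < 0 := not_le.mp fun hd ↦ he.not_ge (same_sign.mp hd)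
    have hcarry := carry_eq_of_imageExcess_eq hsr hd he h
    simpa [imageExcess_of_neg hd, imageExcess_of_neg he, hcarry, hs] using h

theorem abs_le_imageExcess_add_carry {r s : ℕ} (hr : 0 < r) (hrs : r < s) (hdvd : ¬ r ∣ s)
    (e : ℤ) :
    |e| ≤ imageExcess r s e + carry r s e := by
  rcases le_or_gt 0 e with he | he
  · rw [abs_of_nonneg he, imageExcess_of_nonneg he, carry_of_nonneg he, Nat.cast_zero, add_zero]
    exact le_mul_of_one_le_left he (by exact_mod_cast hr)
  · rw [abs_of_neg he, imageExcess_of_neg he, carry]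
    split_ifs with hcarry
    · have e_ne : e ≠ -1 := by
        rintro rfl
        exact hdvd (Int.natCast_dvd_natCast.mp (by simpa using hcarry.2))
      have he_le : e ≤ -2 := by omega
      push_cast
      nlinarith
    · push_cast
      nlinarith

variable {A : Type*} [AddMonoid A] (ℓ w : A →+ ℕ) (z : A) (r s : ℕ)

/-- The difference `|u| - |v|` for a pair `(u, v)`, where `|·|` is the degree `ℓ`. -/
def excess (p : A × A) : ℤ :=
  ℓ p.1 - ℓ p.2

/-- The pair with the same components as `p`, the one of larger degree first. -/
def sortPair (p : A × A) : A × A :=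
  if 0 ≤ excess ℓ p then p else p.swap

/-- The weight `a |u| + b |v| + w(u) + w(v)` of a pair `(u, v)`, where `|·|` is the degree `ℓ`. -/
def pairWeight (a b : ℕ) (p : A × A) : ℕ :=
  a * ℓ p.1 + b * ℓ p.2 + (w p.1 + w p.2)

/-- The map on pairs that carries the weight with coefficients `r, s` to the one with coefficients
`1, r + s - 1`: it sorts the pair and then adds copies of `z`, an element of degree one and weight
zero, to both components. The argument of `Int.toNat` is nonnegative when `0 < r < s` and
`r ∤ s`. -/
def exchange (p : A × A) : A × A :=
  let e := excess ℓ p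
  sortPair ℓ p + ((imageExcess r s e + carry r s e - |e|).toNat • z, carry r s e • z)

variable {ℓ w z r s}

theorem excess_add (p q : A × A) : excess ℓ (p + q) = excess ℓ p + excess ℓ q := by
  simp only [excess, Prod.fst_add, Prod.snd_add, map_add, Nat.cast_add]
  ring

theorem excess_sortPair (p : A × A) : excess ℓ (sortPair ℓ p) = |excess ℓ p| := by
  unfold sortPair
  split_ifs with he
  · exact (abs_of_nonneg he).symm
  · rw [abs_of_neg (not_le.mp he)]
    simp [excess]

theorem excess_exchange (hz : ℓ z = 1) (hr : 0 < r) (hrs : r < s) (hdvd : ¬ r ∣ s) (p : A × A) :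
    excess ℓ (exchange ℓ z r s p) = imageExcess r s (excess ℓ p) := by
  have excess_smul (k j : ℕ) : excess ℓ (k • z, j • z) = k - j := by
    simp [excess, hz]
  rw [exchange, excess_add, excess_sortPair, excess_smul, Int.toNat_of_nonneg
    (sub_nonneg.mpr (abs_le_imageExcess_add_carry hr hrs hdvd (excess ℓ p)))]
  ring

theorem exchange_injective [IsRightCancelAdd A] (hz : ℓ z = 1) (hr : 0 < r) (hrs : r < s)
    (hdvd : ¬ r ∣ s) : Function.Injective (exchange ℓ z r s) := by
  intro p q hpq
  have he : excess ℓ p = excess ℓ q := by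
    apply imageExcess_injective hdvd (Nat.not_dvd_of_pos_of_lt hr hrs)
    rw [← excess_exchange hz hr hrs hdvd, hpq, excess_exchange hz hr hrs hdvd]
  simp only [exchange, sortPair, he] at hpq
  have hpq := add_right_cancel hpq
  split_ifs at hpq
  · exact hpq
  · exact Prod.swap_injective hpq

theorem cast_pairWeight_eq_add_surplus (p : A × A) :
    (pairWeight ℓ w r s p : ℤ) = (r + s) * ℓ (sortPair ℓ p).2 + surplus r s (excess ℓ p) +
      (w (sortPair ℓ p).1 + w (sortPair ℓ p).2) := by
  unfold pairWeight sortPair surplus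
  split_ifs <;> simp only [excess, Prod.fst_swap, Prod.snd_swap] <;> push_cast <;> ring

theorem cast_pairWeight_one_eq_add_excess (h : 0 < r + s) (p : A × A) :
    (pairWeight ℓ w 1 (r + s - 1) p : ℤ) = (r + s) * ℓ p.2 + excess ℓ p + (w p.1 + w p.2) := by
  simp only [pairWeight, excess]
  push_cast [Nat.cast_sub h]
  ring

theorem pairWeight_exchange (hz : ℓ z = 1) (hwz : w z = 0) (hr : 0 < r) (hrs : r < s)
    (hdvd : ¬ r ∣ s) (p : A × A) :
    pairWeight ℓ w 1 (r + s - 1) (exchange ℓ z r s p) = pairWeight ℓ w r s p := by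
  rw [← Nat.cast_inj (R := ℤ), cast_pairWeight_one_eq_add_excess (by omega),
    excess_exchange hz hr hrs hdvd, cast_pairWeight_eq_add_surplus]
  simp only [exchange, imageExcess, Prod.fst_add, Prod.snd_add, map_add, map_nsmul, hz, hwz,
    smul_eq_mul, mul_one, mul_zero, add_zero, Nat.cast_add]
  ring

end Exchange

section PairedParts

variable {ι : Type*} (f : ι → ℕ)

/-- The part sizes `a + f i` and `b + f i`, labelled by two copies of `ι`. -/
def pairedParts (a b : ℕ) : ι ⊕ ι → ℕ :=
  Sum.elim (fun i ↦ a + f i) (fun i ↦ b + f i)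

variable {f} {a b r s : ℕ}

theorem pairedParts_ne_zero (ha : a ≠ 0) (hb : b ≠ 0) (i : ι ⊕ ι) : pairedParts f a b i ≠ 0 := by
  rcases i with i | i <;> simp [pairedParts, ha, hb]

theorem coeff_inv_prod_pairedParts {K : Type*} [Field K] [Fintype ι] (ha : a ≠ 0) (hb : b ≠ 0)
    (n : ℕ) :
    coeff n (∏ i, (1 - (X : K⟦X⟧) ^ (a + f i)) * (1 - X ^ (b + f i)))⁻¹ =
      (numReps (pairedParts f a b) n : K) := by
  rw [← coeff_inv_prod_one_sub_X_pow (pairedParts_ne_zero ha hb), Fintype.prod_sum_type,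
    Finset.prod_mul_distrib]
  rfl

theorem weight_pairedParts [Finite ι] (x : ι ⊕ ι →₀ ℕ) :
    Finsupp.weight (pairedParts f a b) x = pairWeight Finsupp.degree (Finsupp.weight f) a b
      (Finsupp.sumFinsuppAddEquivProdFinsupp x) := by
  cases nonempty_fintype ι
  simp only [Finsupp.weight_eq_sum, Finsupp.degree_eq_sum, Fintype.sum_sum_type, pairWeight,
    pairedParts, Sum.elim_inl, Sum.elim_inr, smul_eq_mul, mul_add, Finset.sum_add_distrib,
    ← Finset.sum_mul, Finsupp.fst_sumFinsuppAddEquivProdFinsupp,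
    Finsupp.snd_sumFinsuppAddEquivProdFinsupp]
  ring

theorem numReps_pairedParts_le [Finite ι] {i₀ : ι} (hf : f i₀ = 0) (hr : 0 < r) (hrs : r < s)
    (hdvd : ¬ r ∣ s) (n : ℕ) :
    numReps (pairedParts f r s) n ≤ numReps (pairedParts f 1 (r + s - 1)) n := by
  have hdeg : Finsupp.degree (Finsupp.single i₀ 1) = 1 := Finsupp.degree_single i₀ 1
  have hweight : Finsupp.weight f (Finsupp.single i₀ 1) = 0 := by
    rw [Finsupp.weight_single, hf, smul_zero]
  let E := Finsupp.sumFinsuppAddEquivProdFinsupp (M := ℕ) (α := ι) (β := ι)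
  let Φ := exchange Finsupp.degree (Finsupp.single i₀ 1) r s
  refine Set.ncard_le_ncard_of_injOn (fun x ↦ E.symm (Φ (E x))) (fun x hx ↦ ?_) ?_ ?_
  · calc Finsupp.weight (pairedParts f 1 (r + s - 1)) (E.symm (Φ (E x)))
        = pairWeight Finsupp.degree (Finsupp.weight f) 1 (r + s - 1) (Φ (E x)) := by
          rw [weight_pairedParts, E.apply_symm_apply]
      _ = pairWeight Finsupp.degree (Finsupp.weight f) r s (E x) :=
          pairWeight_exchange hdeg hweight hr hrs hdvd (E x)
      _ = n := by rw [← weight_pairedParts]; exact hx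
  · exact (E.symm.injective.comp
      ((exchange_injective hdeg hr hrs hdvd).comp E.injective)).injOn
  · exact Finsupp.finite_of_nat_weight_eq _ (pairedParts_ne_zero one_ne_zero (by omega)) n

theorem numReps_pairedParts_lt_of_dvd [Finite ι] {i₀ : ι} (hf₀ : f i₀ = 0)
    (hf : ∀ i, i ≠ i₀ → s ≤ f i) (hr : 1 < r) (hs : s ≠ 0) (hdvd : r ∣ s) :
    numReps (pairedParts f 1 (r + s - 1)) s < numReps (pairedParts f r s) s := by
  have hle : numReps (pairedParts f 1 (r + s - 1)) s ≤ 1 := by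
    refine numReps_le_one_of_forall_lt (i := Sum.inl i₀) (by simp [pairedParts]) ?_
    rintro (i | i) hi
    · have := hf i (by simpa using hi)
      simp only [pairedParts, Sum.elim_inl]
      omega
    · simp only [pairedParts, Sum.elim_inr]
      omega
  have hlt := one_lt_numReps_of_dvd (c := pairedParts f r s)
    (pairedParts_ne_zero (by omega) hs) (Sum.inl_ne_inr (a := i₀) (b := i₀))
    (by simpa [pairedParts, hf₀] using hdvd)
  simp only [pairedParts, Sum.elim_inr, hf₀, add_zero] at hlt
  exact hle.trans_lt hlt

end PairedParts

end BerkovichGarvan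

open BerkovichGarvan in
theorem berkovich_garvan_general {K ι : Type*} [Field K] [PartialOrder K] [IsOrderedRing K]
    [Fintype ι] (f : ι → ℕ) (i₀ : ι) (r s : ℕ) (hf₀ : f i₀ = 0)
    (hf : ∀ i, i ≠ i₀ → max r s ≤ f i) (hr : 1 < r) (hs : 1 < s) :
    (∀ n : ℕ, 0 ≤ coeff n
      ((∏ i, (1 - (X : K⟦X⟧) ^ (1 + f i)) * (1 - X ^ (r + s - 1 + f i)))⁻¹ -
        (∏ i, (1 - (X : K⟦X⟧) ^ (r + f i)) * (1 - X ^ (s + f i)))⁻¹)) ↔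
      ¬ r ∣ s ∧ ¬ s ∣ r := by
  wlog hrs : r ≤ s generalizing r s
  · simpa only [add_comm s r, and_comm, mul_comm (1 - (X : K⟦X⟧) ^ (s + f _))] using
      this s r (by rwa [max_comm]) hs hr (le_of_not_ge hrs)
  simp only [map_sub, sub_nonneg, coeff_inv_prod_pairedParts one_ne_zero
    (show r + s - 1 ≠ 0 by omega), coeff_inv_prod_pairedParts (show r ≠ 0 by omega)
    (show s ≠ 0 by omega), Nat.cast_le]
  constructor
  · intro h
    have hdvd : ¬ r ∣ s := fun hdvd ↦ (h s).not_gt <|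
      numReps_pairedParts_lt_of_dvd hf₀ (fun i hi ↦ le_of_max_le_right (hf i hi)) hr (by omega) hdvd
    refine ⟨hdvd, fun hdvd' ↦ hdvd ?_⟩
    rw [hrs.antisymm (Nat.le_of_dvd (by omega) hdvd')]
  · rintro ⟨hdvd, -⟩
    have hlt : r < s := hrs.lt_of_ne fun h ↦ hdvd h.dvd
    exact numReps_pairedParts_le hf₀ (by omega) hlt hdvd

theorem berkovich_garvan (L m r : ℕ) (hL : 0 < L) (hr : 1 < r) (hrm : r < m - 1) :
    (∀ n : ℕ, 0 ≤ PowerSeries.coeff (R := ℚ) n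
      ((∏ j ∈ Finset.range L,
          (1 - (PowerSeries.X : PowerSeries ℚ) ^ (1 + j * m)) *
          (1 - (PowerSeries.X : PowerSeries ℚ) ^ (m - 1 + j * m)))⁻¹ -
       (∏ j ∈ Finset.range L,
          (1 - (PowerSeries.X : PowerSeries ℚ) ^ (r + j * m)) *
          (1 - (PowerSeries.X : PowerSeries ℚ) ^ (m - r + j * m)))⁻¹)) ↔
    (¬ r ∣ (m - r) ∧ ¬ (m - r) ∣ r) := by
  have hm : r + (m - r) = m := by omega
  have le_mul {j : Fin L} (hj : j ≠ ⟨0, hL⟩) : m ≤ j * m :=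
    Nat.le_mul_of_pos_left m (Nat.pos_of_ne_zero fun h ↦ hj (Fin.ext h))
  simpa only [Finset.prod_range, hm] using berkovich_garvan_general (K := ℚ)
    (fun j : Fin L ↦ j * m) ⟨0, hL⟩ r (m - r) (zero_mul m)
    (fun j hj ↦ le_trans (by omega) (le_mul hj)) hr (by omega)
end

section
/- (Andrews, finite little Göllnitz theorem) Let L > 0 be an integer. In the ring of formal power series over ℚ in one variable q, define f_n by Σ_{n≥0} f_n q^n = (∏_{j=0}^{L−1} (1 − q^{1+8j})(1 − q^{5+8j})(1 − q^{6+8j}))⁻¹ − (∏_{j=0}^{L−1} (1 − q^{2+8j})(1 − q^{3+8j})(1 − q^{7+8j}))⁻¹. Then f_n ≥ 0 for all n ≥ 0. -/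
open PowerSeries

/-!
Write `(a; q)_n = ∏_{j < n} (1 - a q ^ j)`. From `(x; q²)_n (xq; q²)_n = (x; q)_{2n}` and
`(x; q)_n (-x; q)_n = (x²; q²)_n` one gets
`1 / ((x; q²)_n (xq; q²)_n) = G x / (x²; q²)_n` with `G x = (-x; q)_n / (xqⁿ; q)_n`.
The difference of `1 / (x, xq, y²; q²)_n` and `1 / (x², y, yq; q²)_n` is therefore
`(G x - G y) / (x², y²; q²)_n`. If `x - y` is a multiple of `d` by a series with nonnegative
coefficients, then so is `G x - G y`, factor by factor. For `y = x³ q²ⁱ` one can take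
`d = 1 - x² q²ⁱ`, which cancels against a factor of `(x²; q²)_n` as soon as `i < n`. The little
Göllnitz products are the case `x = X`, `q = X⁴`, `i = 0`.
-/

section qPochhammer

variable {R : Type*} [CommRing R]

/-- The finite `q`-Pochhammer product `(a; q)_n`, for arbitrary elements `a` and `q` of a
commutative ring. -/
def qPochhammer (a q : R) (n : ℕ) : R := ∏ j ∈ Finset.range n, (1 - a * q ^ j)

lemma qPochhammer_succ (a q : R) (n : ℕ) :
    qPochhammer a q (n + 1) = qPochhammer a q n * (1 - a * q ^ n) :=
  Finset.prod_range_succ _ n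

lemma qPochhammer_add (a q : R) (m n : ℕ) :
    qPochhammer a q (m + n) = qPochhammer a q m * qPochhammer (a * q ^ m) q n := by
  simp only [qPochhammer, Finset.prod_range_add, pow_add, mul_assoc]

lemma qPochhammer_mul_qPochhammer_neg (a q : R) (n : ℕ) :
    qPochhammer a q n * qPochhammer (-a) q n = qPochhammer (a ^ 2) (q ^ 2) n := by
  simp only [qPochhammer, ← Finset.prod_mul_distrib]
  exact Finset.prod_congr rfl fun j _ => by ring

lemma qPochhammer_sq_mul_qPochhammer_sq (a q : R) (n : ℕ) :
    qPochhammer a (q ^ 2) n * qPochhammer (a * q) (q ^ 2) n = qPochhammer a q (2 * n) := by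
  induction n with
  | zero => simp [qPochhammer]
  | succ n ih =>
    rw [mul_add_one, qPochhammer_succ _ _ (2 * n + 1), qPochhammer_succ a q, ← ih,
      qPochhammer_succ, qPochhammer_succ]
    ring

lemma qPochhammer_sq_mul_qPochhammer_sq_mul_neg (a q : R) (n : ℕ) :
    qPochhammer a (q ^ 2) n * qPochhammer (a * q) (q ^ 2) n * qPochhammer (-a) q n =
      qPochhammer (a * q ^ n) q n * qPochhammer (a ^ 2) (q ^ 2) n := by
  rw [qPochhammer_sq_mul_qPochhammer_sq, two_mul, qPochhammer_add,
    ← qPochhammer_mul_qPochhammer_neg]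
  ring

lemma constantCoeff_qPochhammer {a : R⟦X⟧} (ha : constantCoeff a = 0) (q : R⟦X⟧) (n : ℕ) :
    constantCoeff (qPochhammer a q n) = 1 := by
  simp [qPochhammer, ha]

lemma prod_one_sub_X_pow (c m n : ℕ) :
    ∏ j ∈ Finset.range n, (1 - (X : R⟦X⟧) ^ (c + m * j)) = qPochhammer (X ^ c) (X ^ m) n := by
  simp only [qPochhammer, pow_add, pow_mul]

end qPochhammer

section Inverse

variable {K : Type*} [Field K]

lemma powerSeries_inv_prod {ι : Type*} (s : Finset ι) (f : ι → K⟦X⟧) :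
    (∏ i ∈ s, f i)⁻¹ = ∏ i ∈ s, (f i)⁻¹ := by
  classical
  induction s using Finset.induction_on with
  | empty => simp
  | insert i s hi ih =>
    rw [Finset.prod_insert hi, Finset.prod_insert hi, PowerSeries.mul_inv_rev, ih, mul_comm]

lemma inv_qPochhammer_sq_mul_qPochhammer_sq {x : K⟦X⟧} (hx : constantCoeff x = 0) (q : K⟦X⟧)
    (n : ℕ) :
    (qPochhammer x (q ^ 2) n * qPochhammer (x * q) (q ^ 2) n)⁻¹ =
      qPochhammer (-x) q n * (qPochhammer (x * q ^ n) q n)⁻¹ *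
        (qPochhammer (x ^ 2) (q ^ 2) n)⁻¹ := by
  rw [mul_assoc, mul_comm (qPochhammer (x * q ^ n) q n)⁻¹, ← PowerSeries.mul_inv_rev,
    PowerSeries.eq_mul_inv_iff_mul_eq (by simp [constantCoeff_qPochhammer, hx]),
    ← qPochhammer_sq_mul_qPochhammer_sq_mul_neg, ← mul_assoc,
    PowerSeries.inv_mul_cancel _ (by simp [constantCoeff_qPochhammer, hx]), one_mul]

end Inverse

section Nonneg

variable {R : Type*} [CommSemiring R] [PartialOrder R] [IsOrderedRing R]

variable (R) in
/-- The power series all of whose coefficients are nonnegative, as a subsemiring, so that closure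
under finite sums and products is available as for any subsemiring. -/
def nonnegCoeffs : Subsemiring R⟦X⟧ where
  carrier := {f | ∀ n, 0 ≤ coeff n f}
  mul_mem' hf hg n := by
    rw [coeff_mul]
    exact Finset.sum_nonneg fun p _ => mul_nonneg (hf p.1) (hg p.2)
  one_mem' n := by
    rw [coeff_one]
    split_ifs <;> simp
  add_mem' hf hg n := by
    rw [map_add]
    exact add_nonneg (hf n) (hg n)
  zero_mem' n := by simp

lemma mem_nonnegCoeffs {f : R⟦X⟧} : f ∈ nonnegCoeffs R ↔ ∀ n, 0 ≤ coeff n f := Iff.rfl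

lemma X_mem_nonnegCoeffs : (X : R⟦X⟧) ∈ nonnegCoeffs R := fun n => by
  rw [coeff_X]
  split_ifs <;> simp

end Nonneg

section InvNonneg

variable {K : Type*} [Field K] [PartialOrder K] [IsOrderedRing K] {f a q : K⟦X⟧}

lemma inv_one_sub_mem_nonnegCoeffs (hf : f ∈ nonnegCoeffs K) (hf0 : constantCoeff f = 0) :
    (1 - f)⁻¹ ∈ nonnegCoeffs K := by
  have geometric : (1 - f)⁻¹ = 1 + f * (1 - f)⁻¹ := by
    linear_combination PowerSeries.mul_inv_cancel (1 - f) (by simp [hf0])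
  intro n
  induction n using Nat.strong_induction_on with
  | _ n ih =>
    rw [geometric, map_add, coeff_mul]
    refine add_nonneg (one_mem (nonnegCoeffs K) n) (Finset.sum_nonneg fun p hp => ?_)
    obtain ⟨_ | i, j⟩ := p
    · simp [hf0]
    · have hij : i + 1 + j = n := Finset.HasAntidiagonal.mem_antidiagonal.mp hp
      exact mul_nonneg (hf _) (ih j (by omega))

lemma inv_one_sub_mul_pow_mem_nonnegCoeffs (ha : a ∈ nonnegCoeffs K) (hq : q ∈ nonnegCoeffs K)
    (ha0 : constantCoeff a = 0) (j : ℕ) : (1 - a * q ^ j)⁻¹ ∈ nonnegCoeffs K :=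
  inv_one_sub_mem_nonnegCoeffs (mul_mem ha (pow_mem hq j)) (by simp [ha0])

lemma inv_qPochhammer_mem_nonnegCoeffs (ha : a ∈ nonnegCoeffs K) (hq : q ∈ nonnegCoeffs K)
    (ha0 : constantCoeff a = 0) (n : ℕ) : (qPochhammer a q n)⁻¹ ∈ nonnegCoeffs K := by
  rw [qPochhammer, powerSeries_inv_prod]
  exact prod_mem fun j _ => inv_one_sub_mul_pow_mem_nonnegCoeffs ha hq ha0 j

lemma one_sub_mul_inv_qPochhammer_mem_nonnegCoeffs (ha : a ∈ nonnegCoeffs K)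
    (hq : q ∈ nonnegCoeffs K) (ha0 : constantCoeff a = 0) {i n : ℕ} (hi : i < n) :
    (1 - a * q ^ i) * (qPochhammer a q n)⁻¹ ∈ nonnegCoeffs K := by
  rw [qPochhammer, powerSeries_inv_prod, ← Finset.mul_prod_erase _ _ (Finset.mem_range.mpr hi),
    ← mul_assoc, PowerSeries.mul_inv_cancel _ (by simp [ha0]), one_mul]
  exact prod_mem fun j _ => inv_one_sub_mul_pow_mem_nonnegCoeffs ha hq ha0 j

end InvNonneg

/-- `DominatesBy d A B` says that `A` and `B` have nonnegative coefficients and that `A` exceeds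
`B` by a multiple of `d` whose cofactor also has nonnegative coefficients. The series `d` itself
may have negative coefficients. -/
structure DominatesBy {R : Type*} [CommRing R] [PartialOrder R] [IsOrderedRing R]
    (d A B : R⟦X⟧) : Prop where
  left_mem : A ∈ nonnegCoeffs R
  right_mem : B ∈ nonnegCoeffs R
  exists_sub_eq : ∃ C ∈ nonnegCoeffs R, A - B = d * C

namespace DominatesBy

section Ring

variable {R : Type*} [CommRing R] [PartialOrder R] [IsOrderedRing R] {d A B A' B' q : R⟦X⟧}

lemma refl (d : R⟦X⟧) (hA : A ∈ nonnegCoeffs R) : DominatesBy d A A :=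
  ⟨hA, hA, 0, zero_mem _, by simp⟩

lemma add (h : DominatesBy d A B) (h' : DominatesBy d A' B') :
    DominatesBy d (A + A') (B + B') := by
  obtain ⟨C, hC, hAB⟩ := h.exists_sub_eq
  obtain ⟨C', hC', hAB'⟩ := h'.exists_sub_eq
  exact ⟨add_mem h.left_mem h'.left_mem, add_mem h.right_mem h'.right_mem, C + C',
    add_mem hC hC', by linear_combination hAB + hAB'⟩

lemma mul (h : DominatesBy d A B) (h' : DominatesBy d A' B') :
    DominatesBy d (A * A') (B * B') := by
  obtain ⟨C, hC, hAB⟩ := h.exists_sub_eq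
  obtain ⟨C', hC', hAB'⟩ := h'.exists_sub_eq
  exact ⟨mul_mem h.left_mem h'.left_mem, mul_mem h.right_mem h'.right_mem, A * C' + C * B',
    add_mem (mul_mem h.left_mem hC') (mul_mem hC h'.right_mem),
    by linear_combination A * hAB' + B' * hAB⟩

lemma prod {ι : Type*} (s : Finset ι) {f g : ι → R⟦X⟧} (h : ∀ i, DominatesBy d (f i) (g i)) :
    DominatesBy d (∏ i ∈ s, f i) (∏ i ∈ s, g i) :=
  Finset.prod_hom_rel (refl d (one_mem _)) fun i _ _ hs => (h i).mul hs

lemma mul_pow_right (h : DominatesBy d A B) (hq : q ∈ nonnegCoeffs R) (j : ℕ) :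
    DominatesBy d (A * q ^ j) (B * q ^ j) :=
  h.mul (refl d (pow_mem hq j))

lemma qPochhammer_neg (h : DominatesBy d A B) (hq : q ∈ nonnegCoeffs R) (n : ℕ) :
    DominatesBy d (qPochhammer (-A) q n) (qPochhammer (-B) q n) := by
  simp only [qPochhammer, neg_mul, sub_neg_eq_add]
  exact prod _ fun j => (refl d (one_mem _)).add (h.mul_pow_right hq j)

lemma sub_mul_mem_nonnegCoeffs (h : DominatesBy d A B) {F : R⟦X⟧}
    (hF : d * F ∈ nonnegCoeffs R) : (A - B) * F ∈ nonnegCoeffs R := by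
  obtain ⟨C, hC, hAB⟩ := h.exists_sub_eq
  rw [hAB, mul_right_comm]
  exact mul_mem hF hC

end Ring

section Field

variable {K : Type*} [Field K] [PartialOrder K] [IsOrderedRing K] {d A B q : K⟦X⟧}

lemma inv_one_sub (h : DominatesBy d A B) (hA : constantCoeff A = 0) (hB : constantCoeff B = 0) :
    DominatesBy d (1 - A)⁻¹ (1 - B)⁻¹ := by
  have hA' := inv_one_sub_mem_nonnegCoeffs h.left_mem hA
  have hB' := inv_one_sub_mem_nonnegCoeffs h.right_mem hB
  obtain ⟨C, hC, hAB⟩ := h.exists_sub_eq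
  refine ⟨hA', hB', C * ((1 - A)⁻¹ * (1 - B)⁻¹), mul_mem hC (mul_mem hA' hB'), ?_⟩
  have hAinv := PowerSeries.mul_inv_cancel (1 - A) (by simp [hA])
  have hBinv := PowerSeries.mul_inv_cancel (1 - B) (by simp [hB])
  linear_combination (1 - B)⁻¹ * hAinv - (1 - A)⁻¹ * hBinv + (1 - A)⁻¹ * (1 - B)⁻¹ * hAB

lemma inv_qPochhammer (h : DominatesBy d A B) (hA : constantCoeff A = 0)
    (hB : constantCoeff B = 0) (hq : q ∈ nonnegCoeffs K) (n : ℕ) :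
    DominatesBy d (qPochhammer A q n)⁻¹ (qPochhammer B q n)⁻¹ := by
  simp only [qPochhammer, powerSeries_inv_prod]
  exact prod _ fun j => (h.mul_pow_right hq j).inv_one_sub (by simp [hA]) (by simp [hB])

end Field

end DominatesBy

theorem andrews_finite_little_gollnitz_general {K : Type*} [Field K] [PartialOrder K]
    [IsOrderedRing K] {x y q : K⟦X⟧} (hx : x ∈ nonnegCoeffs K) (hq : q ∈ nonnegCoeffs K)
    (hx0 : constantCoeff x = 0) {i L : ℕ} (hi : i < L) (hy : y = x ^ 3 * (q ^ 2) ^ i) :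
    (qPochhammer x (q ^ 2) L *
        (qPochhammer (x * q) (q ^ 2) L * qPochhammer (y ^ 2) (q ^ 2) L))⁻¹ -
      (qPochhammer (x ^ 2) (q ^ 2) L *
        (qPochhammer y (q ^ 2) L * qPochhammer (y * q) (q ^ 2) L))⁻¹ ∈ nonnegCoeffs K := by
  have hy0 : constantCoeff y = 0 := by simp [hy, hx0]
  have hq2 : q ^ 2 ∈ nonnegCoeffs K := pow_mem hq 2
  have hy_mem : y ∈ nonnegCoeffs K := hy ▸ mul_mem (pow_mem hx 3) (pow_mem hq2 i)
  have hxy : DominatesBy (1 - x ^ 2 * (q ^ 2) ^ i) x y := ⟨hx, hy_mem, x, hx, by rw [hy]; ring⟩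
  have hG := (hxy.qPochhammer_neg hq L).mul
    ((hxy.mul_pow_right hq L).inv_qPochhammer (by simp [hx0]) (by simp [hy0]) hq L)
  have hF := mul_mem
    (one_sub_mul_inv_qPochhammer_mem_nonnegCoeffs (pow_mem hx 2) hq2 (by simp [hx0]) hi)
    (inv_qPochhammer_mem_nonnegCoeffs (pow_mem hy_mem 2) hq2 (by simp [hy0]) L)
  rw [mul_assoc] at hF
  convert hG.sub_mul_mem_nonnegCoeffs hF using 1
  rw [← mul_assoc, PowerSeries.mul_inv_rev, PowerSeries.mul_inv_rev (qPochhammer (x ^ 2) _ _),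
    inv_qPochhammer_sq_mul_qPochhammer_sq hx0, inv_qPochhammer_sq_mul_qPochhammer_sq hy0]
  ring

theorem andrews_finite_little_gollnitz (L : ℕ) (hL : 0 < L) (n : ℕ) :
    0 ≤ PowerSeries.coeff (R := ℚ) n
      ((∏ j ∈ Finset.range L,
          (1 - (PowerSeries.X : PowerSeries ℚ) ^ (1 + 8 * j)) *
          ((1 - (PowerSeries.X : PowerSeries ℚ) ^ (5 + 8 * j)) *
           (1 - (PowerSeries.X : PowerSeries ℚ) ^ (6 + 8 * j))))⁻¹ -
       (∏ j ∈ Finset.range L,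
          (1 - (PowerSeries.X : PowerSeries ℚ) ^ (2 + 8 * j)) *
          ((1 - (PowerSeries.X : PowerSeries ℚ) ^ (3 + 8 * j)) *
           (1 - (PowerSeries.X : PowerSeries ℚ) ^ (7 + 8 * j))))⁻¹) := by
  simpa only [Finset.prod_mul_distrib, prod_one_sub_X_pow, pow_zero, mul_one, pow_one,
      ← pow_mul, ← pow_add, ← pow_succ', Nat.reduceMul, Nat.reduceAdd] using
    mem_nonnegCoeffs.mp (andrews_finite_little_gollnitz_general (x := (X : ℚ⟦X⟧))
      (q := X ^ 4) X_mem_nonnegCoeffs (pow_mem X_mem_nonnegCoeffs 4) constantCoeff_X hL rfl) n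
end

section
/- (Berkovich–Grizzell) Let L > 0 be an integer and let y > 1 be an odd integer. In the ring of formal power series over ℚ in one variable q, write a(L,y,n) for the coefficients of (∏_{j=0}^{L−1} (1 − q^{1+j(2y+2)})(1 − q^{y+2+j(2y+2)})(1 − q^{2y+j(2y+2)}))⁻¹ − (∏_{j=0}^{L−1} (1 − q^{2+j(2y+2)})(1 − q^{y+j(2y+2)})(1 − q^{2y+1+j(2y+2)}))⁻¹ = Σ_{n≥0} a(L,y,n) q^n. Then a(L,y,n) ≥ 0 for all n ≥ 0. -/
open PowerSeries

/-!
Write `q = X`, `y = 2 * k + 1`, `r = q ^ (2 * k)` and `p = q ^ 4 * r ^ 2`. At `x = p ^ j` the two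
products have the blocks `A(x) = (1 - xq)(1 - xq³r)(1 - xq²r²)` and
`B(x) = (1 - xq²)(1 - xqr)(1 - xq³r²)`. With `C(x) = (1 - xqr)(1 - xq²r)(1 - xq³r)`,
`T = (1 - r)(1 - qr)` and `φ(x) = xq / ((1 - xq)(1 - xq²r²))` one has `C(x) / A(x) = 1 + T φ(x)` and
`C(x) / B(x) = 1 + T φ(qx)`, hence `(1 + T φ(qx)) / A(x) = (1 + T φ(x)) / B(x)`.

This lets one strengthen the claim to an inequality that survives multiplication by one more block.
Let `E` be a suitable upper bound of `1 / (B(1) B(p))`. For `2 ≤ L` the difference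
`∏_{j < L} 1 / A(p ^ j) - E ∏_{2 ≤ j < L} 1 / B(p ^ j) * (1 + T φ(q p ^ L))` is nonnegative: passing
from `L` to `L + 1` multiplies it by `1 / A(x)`, where `x = p ^ L`, and adds a nonnegative multiple
of `E T (φ(x) - φ(qpx))`. The series `E T` has nonnegative coefficients, because `1 - q²` divides
`1 - r` with nonnegative quotient, and it contains the factor `1 / (1 - q⁵r²) = 1 / (1 - qp)`.
Multiplication by the latter makes `1 - qp` nonnegative, which is all that separates `φ(x)` from
`φ(qpx)`. Since `E T φ(q p ^ L)` and `E - 1 / (B(1) B(p))` are nonnegative, the claim follows.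
-/

namespace BerkovichGrizzell

section Domination

variable {R : Type*} [CommRing R] {P : Subsemiring R}

/-- `f` is at most `g` in the order given by the cone `P`, after multiplication by the weight `d`.
In the application `P` consists of the images of the power series over `ℕ` in a field. -/
def DominatedBy (P : Subsemiring R) (d f g : R) : Prop :=
  d * (g - f) ∈ P

namespace DominatedBy

variable {d f f' g g' h : R}

lemma of_sub_mem (hd : d ∈ P) (hfg : g - f ∈ P) : DominatedBy P d f g :=
  mul_mem hd hfg

lemma mul_weight (hfg : DominatedBy P d f g) {e : R} (he : e ∈ P) :
    DominatedBy P (d * e) f g := by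
  simpa only [DominatedBy, mul_right_comm] using mul_mem hfg he

lemma trans (hfg : DominatedBy P d f g) (hgh : DominatedBy P d g h) : DominatedBy P d f h := by
  simpa only [DominatedBy, ← mul_add, sub_add_sub_cancel] using add_mem hgh hfg

lemma add (hf : DominatedBy P d f f') (hg : DominatedBy P d g g') :
    DominatedBy P d (f + g) (f' + g') := by
  simpa only [DominatedBy, ← mul_add, add_sub_add_comm] using add_mem hf hg

lemma mul (hf : DominatedBy P d f f') (hg : DominatedBy P d g g') (hf' : f' ∈ P) (hg₀ : g ∈ P) :
    DominatedBy P d (f * g) (f' * g') := by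
  have split : d * (f' * g' - f * g) = f' * (d * (g' - g)) + d * (f' - f) * g := by ring
  rw [DominatedBy, split]
  exact add_mem (mul_mem hf' hg) (mul_mem hf hg₀)

end DominatedBy

/-- The elements of `P` dominated by `1` under the weight `d`, for instance `w` itself if
`d = (1 - w)⁻¹`. -/
def absorbed (P : Subsemiring R) (d : R) : Submonoid R where
  carrier := {w | w ∈ P ∧ DominatedBy P d w 1}
  one_mem' := ⟨one_mem P, by simp only [DominatedBy, sub_self, mul_zero, zero_mem]⟩
  mul_mem' := fun {_ _} hv hw => ⟨mul_mem hv.1 hw.1, by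
    simpa only [mul_one] using hv.2.mul hw.2 (one_mem P) hw.1⟩

lemma absorbed_le_absorbed_mul {d e : R} (he : e ∈ P) : absorbed P d ≤ absorbed P (d * e) :=
  fun _ hw => ⟨hw.1, hw.2.mul_weight he⟩

lemma DominatedBy.absorbed_mul {d w z : R} (hw : w ∈ absorbed P d) (hz : z ∈ P) :
    DominatedBy P d (w * z) z := by
  have factor : d * (z - w * z) = d * (1 - w) * z := by ring
  rw [DominatedBy, factor]
  exact mul_mem hw.2 hz

end Domination

variable {K : Type*} [Field K] {P : Subsemiring K} {q r : K}

/-- `u` has a geometric series `(1 - u)⁻¹` inside the cone `P`. -/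
structure HasGeomSeries (P : Subsemiring K) (u : K) : Prop where
  mem : u ∈ P
  one_sub_ne_zero : 1 - u ≠ 0
  inv_mem : (1 - u)⁻¹ ∈ P

lemma HasGeomSeries.mem_absorbed {u : K} (hu : HasGeomSeries P u) : u ∈ absorbed P (1 - u)⁻¹ :=
  ⟨hu.mem, by simp only [DominatedBy, inv_mul_cancel₀ hu.one_sub_ne_zero, one_mem]⟩

lemma DominatedBy.inv_one_sub {d w z : K} (hw : w ∈ absorbed P d) (hz : HasGeomSeries P z)
    (hwz : HasGeomSeries P (w * z)) : DominatedBy P d (1 - w * z)⁻¹ (1 - z)⁻¹ := by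
  have factor : d * ((1 - z)⁻¹ - (1 - w * z)⁻¹) =
      d * (1 - w) * z * ((1 - z)⁻¹ * (1 - w * z)⁻¹) := by
    rw [inv_sub_inv hz.one_sub_ne_zero hwz.one_sub_ne_zero, div_eq_mul_inv, mul_inv]
    ring
  rw [DominatedBy, factor]
  exact mul_mem (mul_mem hw.2 hz.mem) (mul_mem hz.inv_mem hwz.inv_mem)

/-- The abstract setting of the argument: `q` and `r` stand for `X` and `X ^ (2 * k)`, where
`y = 2 * k + 1`. The second field amounts to `(1 - r) / (1 - q ^ 2) ∈ P`. -/
structure IsMonomialPair (P : Subsemiring K) (q r : K) : Prop where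
  hasGeomSeries_monomial : ∀ {a : ℕ} (b : ℕ), 0 < a → HasGeomSeries P (q ^ a * r ^ b)
  right_mem_absorbed : r ∈ absorbed P (1 - q ^ 2)⁻¹

/-- The factors of the first product for one index `j`, with `x = (q ^ 4 * r ^ 2) ^ j`, that is,
`x = X ^ (j * (2 * y + 2))`. -/
def leftBlock (q r x : K) : K := (1 - x * q) * (1 - x * q ^ 3 * r) * (1 - x * q ^ 2 * r ^ 2)

/-- The factors of the second product for one index `j`, with `x` as in `leftBlock`. -/
def rightBlock (q r x : K) : K := (1 - x * q ^ 2) * (1 - x * q * r) * (1 - x * q ^ 3 * r ^ 2)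

/-- The block `C(x)` interpolating between `A(x) = leftBlock q r x` and `B(x) = rightBlock q r x`:
its quotients by the two are `1 + T * φ(x)` and `1 + T * φ(q * x)`, with one and the same `φ`. -/
def middleBlock (q r x : K) : K :=
  (1 - x * q * r) * (1 - x * q ^ 2 * r) * (1 - x * q ^ 3 * r)

/-- The series `φ(x)`: the excess over `1` of `middleBlock / leftBlock`, divided by
`T = (1 - r) * (1 - q * r)`. -/
def excess (q r x : K) : K := x * q * (1 - x * q)⁻¹ * (1 - x * q ^ 2 * r ^ 2)⁻¹

/-- The upper bound `E` for the inverse of the first two right blocks, in which the factor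
`1 - q ^ 5 * r ^ 3` is replaced by `1 - q ^ 5 * r ^ 2`. -/
def majorant (q r : K) : K :=
  ((1 - q ^ 2) * (1 - q * r) * (1 - q ^ 3 * r ^ 2) * (1 - q ^ 5 * r ^ 2) * (1 - q ^ 6 * r ^ 2) *
    (1 - q ^ 7 * r ^ 4))⁻¹

/-- The weight `E * T` under which values of `φ` are compared, with `1 - q * r` cancelled. -/
def weight (q r : K) : K :=
  (1 - q ^ 2)⁻¹ * (1 - r) *
    ((1 - q ^ 3 * r ^ 2) * (1 - q ^ 5 * r ^ 2) * (1 - q ^ 6 * r ^ 2) * (1 - q ^ 7 * r ^ 4))⁻¹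

/-- The denominator of the first series. -/
def leftProd (q r : K) (L : ℕ) : K := ∏ j ∈ Finset.range L, leftBlock q r ((q ^ 4 * r ^ 2) ^ j)

/-- The denominator of the second series. -/
def rightProd (q r : K) (L : ℕ) : K := ∏ j ∈ Finset.range L, rightBlock q r ((q ^ 4 * r ^ 2) ^ j)

/-- The denominator of the second series without its first two blocks. -/
def rightTail (q r : K) (L : ℕ) : K := ∏ j ∈ Finset.Ico 2 L, rightBlock q r ((q ^ 4 * r ^ 2) ^ j)

lemma middleBlock_mul_inv_leftBlock {x : K} (h₁ : 1 - x * q ≠ 0) (h₂ : 1 - x * q ^ 3 * r ≠ 0)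
    (h₃ : 1 - x * q ^ 2 * r ^ 2 ≠ 0) :
    middleBlock q r x * (leftBlock q r x)⁻¹ = 1 + (1 - r) * (1 - q * r) * excess q r x := by
  rw [middleBlock, leftBlock, excess]
  field_simp
  ring

lemma middleBlock_mul_inv_rightBlock {x : K} (h₁ : 1 - x * q ^ 2 ≠ 0) (h₂ : 1 - x * q * r ≠ 0)
    (h₃ : 1 - x * q ^ 3 * r ^ 2 ≠ 0) :
    middleBlock q r x * (rightBlock q r x)⁻¹ =
      1 + (1 - r) * (1 - q * r) * excess q r (q * x) := by
  have excess_mul : excess q r (q * x) =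
      x * q ^ 2 * (1 - x * q ^ 2)⁻¹ * (1 - x * q ^ 3 * r ^ 2)⁻¹ := by rw [excess]; ring
  rw [middleBlock, rightBlock, excess_mul]
  field_simp
  ring

lemma excess_dominatedBy {d w x : K} (hw : w ∈ absorbed P d)
    (hx : HasGeomSeries P (x * q)) (hwx : HasGeomSeries P (w * x * q))
    (hx' : HasGeomSeries P (x * q ^ 2 * r ^ 2))
    (hwx' : HasGeomSeries P (w * x * q ^ 2 * r ^ 2)) :
    DominatedBy P d (excess q r (w * x)) (excess q r x) := by
  have assoc : w * x * q = w * (x * q) := mul_assoc w x q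
  have assoc' : w * x * q ^ 2 * r ^ 2 = w * (x * q ^ 2 * r ^ 2) := by ring
  rw [assoc] at hwx
  rw [assoc'] at hwx'
  rw [excess, excess, assoc, assoc']
  exact ((DominatedBy.absorbed_mul hw hx.mem).mul (.inv_one_sub hw hx hwx) hx.mem
    hwx.inv_mem).mul (.inv_one_sub hw hx' hwx') (mul_mem hx.mem hx.inv_mem) hwx'.inv_mem

namespace IsMonomialPair

lemma geom (h : IsMonomialPair P q r) (a b : ℕ) {u : K} (hu : u = q ^ a * r ^ b := by ring)
    (ha : 0 < a := by positivity) : HasGeomSeries P u :=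
  hu ▸ h.hasGeomSeries_monomial b ha

lemma inv_leftBlock_mem (h : IsMonomialPair P q r) (j : ℕ) :
    (leftBlock q r ((q ^ 4 * r ^ 2) ^ j))⁻¹ ∈ P := by
  simp only [leftBlock, mul_inv]
  exact mul_mem (mul_mem (h.geom (4 * j + 1) (2 * j)).inv_mem
    (h.geom (4 * j + 3) (2 * j + 1)).inv_mem) (h.geom (4 * j + 2) (2 * j + 2)).inv_mem

lemma inv_rightBlock_mem (h : IsMonomialPair P q r) (j : ℕ) :
    (rightBlock q r ((q ^ 4 * r ^ 2) ^ j))⁻¹ ∈ P := by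
  simp only [rightBlock, mul_inv]
  exact mul_mem (mul_mem (h.geom (4 * j + 2) (2 * j)).inv_mem
    (h.geom (4 * j + 1) (2 * j + 1)).inv_mem) (h.geom (4 * j + 3) (2 * j + 2)).inv_mem

lemma inv_rightTail_mem (h : IsMonomialPair P q r) (L : ℕ) : (rightTail q r L)⁻¹ ∈ P := by
  rw [rightTail, ← Finset.prod_inv_distrib]
  exact prod_mem fun j _ => h.inv_rightBlock_mem j

lemma excess_mul_pow_mem (h : IsMonomialPair P q r) (j : ℕ) :
    excess q r (q * (q ^ 4 * r ^ 2) ^ j) ∈ P := by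
  have hq := h.geom (4 * j + 2) (2 * j) (u := q * (q ^ 4 * r ^ 2) ^ j * q)
  exact mul_mem (mul_mem hq.mem hq.inv_mem) (h.geom (4 * j + 3) (2 * j + 2)).inv_mem

lemma inv_leftBlock_mul_eq_inv_rightBlock_mul (h : IsMonomialPair P q r) (j : ℕ) :
    (leftBlock q r ((q ^ 4 * r ^ 2) ^ j))⁻¹ *
        (1 + (1 - r) * (1 - q * r) * excess q r (q * (q ^ 4 * r ^ 2) ^ j)) =
      (rightBlock q r ((q ^ 4 * r ^ 2) ^ j))⁻¹ *
        (1 + (1 - r) * (1 - q * r) * excess q r ((q ^ 4 * r ^ 2) ^ j)) := by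
  rw [← middleBlock_mul_inv_rightBlock (h.geom (4 * j + 2) (2 * j)).one_sub_ne_zero
      (h.geom (4 * j + 1) (2 * j + 1)).one_sub_ne_zero
      (h.geom (4 * j + 3) (2 * j + 2)).one_sub_ne_zero,
    ← middleBlock_mul_inv_leftBlock (h.geom (4 * j + 1) (2 * j)).one_sub_ne_zero
      (h.geom (4 * j + 3) (2 * j + 1)).one_sub_ne_zero
      (h.geom (4 * j + 2) (2 * j + 2)).one_sub_ne_zero]
  ring

lemma one_sub_mul_inv_mem (h : IsMonomialPair P q r) : (1 - q ^ 2)⁻¹ * (1 - r) ∈ P :=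
  h.right_mem_absorbed.2

lemma weight_mem (h : IsMonomialPair P q r) : weight q r ∈ P := by
  simp only [weight, mul_inv]
  exact mul_mem h.one_sub_mul_inv_mem (mul_mem (mul_mem (mul_mem (h.geom 3 2).inv_mem
    (h.geom 5 2).inv_mem) (h.geom 6 2).inv_mem) (h.geom 7 4).inv_mem)

lemma majorant_mul (h : IsMonomialPair P q r) :
    majorant q r * ((1 - r) * (1 - q * r)) = weight q r := by
  have h₁ : 1 - q * r ≠ 0 := (h.geom 1 1).one_sub_ne_zero
  simp only [majorant, weight, mul_inv]
  field_simp

lemma majorant_sub_inv_rightProd_two_mem (h : IsMonomialPair P q r) :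
    majorant q r - (rightProd q r 2)⁻¹ ∈ P := by
  set e : K := ((1 - q * r) * (1 - q ^ 3 * r ^ 2) * (1 - q ^ 6 * r ^ 2) * (1 - q ^ 7 * r ^ 4))⁻¹
    with he
  have he_mem : e ∈ P := by
    simp only [he, mul_inv]
    exact mul_mem (mul_mem (mul_mem (h.geom 1 1).inv_mem (h.geom 3 2).inv_mem)
      (h.geom 6 2).inv_mem) (h.geom 7 4).inv_mem
  have comparison := DominatedBy.inv_one_sub (absorbed_le_absorbed_mul he_mem h.right_mem_absorbed)
    (h.geom 5 2 rfl) (h.geom 5 3 (u := r * (q ^ 5 * r ^ 2)))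
  rw [DominatedBy] at comparison
  convert comparison using 1
  have blocks : rightProd q r 2 = (1 - q ^ 2) * ((1 - q * r) * (1 - q ^ 3 * r ^ 2) *
      (1 - q ^ 6 * r ^ 2) * (1 - q ^ 7 * r ^ 4)) * (1 - r * (q ^ 5 * r ^ 2)) := by
    simp only [rightProd, rightBlock, Finset.prod_range_succ, Finset.prod_range_zero]
    ring
  rw [blocks, majorant, he]
  simp only [mul_inv]
  ring

lemma inv_leftProd_two (h : IsMonomialPair P q r) :
    (leftProd q r 2)⁻¹ = majorant q r +
      weight q r * ((q + q ^ 7 * r ^ 3) * (1 - q ^ 7 * r ^ 3)⁻¹ * (1 - q ^ 2 * r ^ 2)⁻¹) +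
      (1 - q ^ 2)⁻¹ * (1 - r) * (q ^ 3 * r * (1 + q) * ((1 - q ^ 6 * r ^ 4) * (1 - q ^ 6 * r ^ 2) *
        (1 - q ^ 5 * r ^ 2) * (1 - q ^ 2 * r ^ 2) * (1 - q ^ 7 * r ^ 3))⁻¹) := by
  have h₁₀ : 1 - q ≠ 0 := (h.geom 1 0).one_sub_ne_zero
  have h₁₁ : 1 - q * r ≠ 0 := (h.geom 1 1).one_sub_ne_zero
  have h₂₀ : 1 - q ^ 2 ≠ 0 := (h.geom 2 0).one_sub_ne_zero
  have h₃₁ : 1 - q ^ 3 * r ≠ 0 := (h.geom 3 1).one_sub_ne_zero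
  have h₂₂ := (h.geom 2 2 rfl).one_sub_ne_zero
  have h₃₂ := (h.geom 3 2 rfl).one_sub_ne_zero
  have h₅₂ := (h.geom 5 2 rfl).one_sub_ne_zero
  have h₆₂ := (h.geom 6 2 rfl).one_sub_ne_zero
  have h₆₄ := (h.geom 6 4 rfl).one_sub_ne_zero
  have h₇₃ := (h.geom 7 3 rfl).one_sub_ne_zero
  have h₇₄ := (h.geom 7 4 rfl).one_sub_ne_zero
  have blocks : leftProd q r 2 = (1 - q) * (1 - q ^ 3 * r) * (1 - q ^ 2 * r ^ 2) *
      ((1 - q ^ 5 * r ^ 2) * (1 - q ^ 7 * r ^ 3) * (1 - q ^ 6 * r ^ 4)) := by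
    simp only [leftProd, leftBlock, Finset.prod_range_succ, Finset.prod_range_zero]
    ring
  rw [blocks, majorant, weight]
  field_simp
  ring

lemma mem_absorbed_weight (h : IsMonomialPair P q r) :
    q ^ 3 * r ^ 2 ∈ absorbed P (weight q r) ∧ q ^ 5 * r ^ 2 ∈ absorbed P (weight q r) ∧
      q ^ 6 * r ^ 2 ∈ absorbed P (weight q r) := by
  have absorbed_of_eq {u e : K} (hu : HasGeomSeries P u) (he : e ∈ P)
      (hw : weight q r = (1 - u)⁻¹ * e) : u ∈ absorbed P (weight q r) :=
    hw ▸ absorbed_le_absorbed_mul he hu.mem_absorbed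
  have h₀ := h.one_sub_mul_inv_mem
  have h₃ := h.geom 3 2 rfl
  have h₅ := h.geom 5 2 rfl
  have h₆ := h.geom 6 2 rfl
  have h₇ := (h.geom 7 4 rfl).inv_mem
  refine ⟨absorbed_of_eq h₃ (mul_mem (mul_mem (mul_mem h₀ h₅.inv_mem) h₆.inv_mem) h₇) ?_,
    absorbed_of_eq h₅ (mul_mem (mul_mem (mul_mem h₀ h₃.inv_mem) h₆.inv_mem) h₇) ?_,
    absorbed_of_eq h₆ (mul_mem (mul_mem (mul_mem h₀ h₃.inv_mem) h₅.inv_mem) h₇) ?_⟩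
  all_goals
    simp only [weight, mul_inv]
    ring

lemma mul_inv_one_sub_dominatedBy (h : IsMonomialPair P q r) :
    DominatedBy P (weight q r) (q ^ 10 * r ^ 4 * (1 - q ^ 10 * r ^ 4)⁻¹)
      ((q + q ^ 7 * r ^ 3) * (1 - q ^ 7 * r ^ 3)⁻¹) := by
  obtain ⟨w₃, -, w₆⟩ := h.mem_absorbed_weight
  have hq : HasGeomSeries P q := h.geom 1 0
  have h₇ := h.geom 7 3 rfl
  have h₁₀ := h.geom 10 4 rfl
  have h₁₄ := h.geom 14 6 rfl
  have h₂₀ : HasGeomSeries P (q ^ 6 * r ^ 2 * (q ^ 14 * r ^ 6)) := h.geom 20 8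
  -- The quotient `q ^ 3 * r` of the two ratios is not among the absorbed ratios of the weight, but
  -- its square is. So both series are compared after squaring their ratios.
  have doubled : q ^ 10 * r ^ 4 * (1 - q ^ 10 * r ^ 4)⁻¹ =
      (q ^ 3 * r ^ 2 * (q ^ 6 * r ^ 2) * q + q ^ 6 * r ^ 2 * (q ^ 14 * r ^ 6)) *
        (1 - q ^ 6 * r ^ 2 * (q ^ 14 * r ^ 6))⁻¹ := by
    rw [eq_mul_inv_iff_mul_eq₀ h₂₀.one_sub_ne_zero]
    linear_combination
      q ^ 10 * r ^ 4 * (1 + q ^ 10 * r ^ 4) * inv_mul_cancel₀ h₁₀.one_sub_ne_zero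
  have termwise := ((DominatedBy.absorbed_mul (mul_mem w₃ w₆) hq.mem).add
    (.absorbed_mul w₆ h₁₄.mem)).mul (.inv_one_sub w₆ h₁₄ h₂₀)
    (add_mem hq.mem h₁₄.mem) h₂₀.inv_mem
  have undoubled : (q + q ^ 7 * r ^ 3) * (1 - q ^ 7 * r ^ 3)⁻¹ -
      (q + q ^ 14 * r ^ 6) * (1 - q ^ 14 * r ^ 6)⁻¹ =
        q ^ 7 * r ^ 3 * (1 + q) * (1 - q ^ 14 * r ^ 6)⁻¹ := by
    have h₇₀ := h₇.one_sub_ne_zero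
    have h₁₄₀ := h₁₄.one_sub_ne_zero
    field_simp
    ring
  rw [doubled]
  refine termwise.trans (.of_sub_mem h.weight_mem ?_)
  rw [undoubled]
  exact mul_mem (mul_mem h₇.mem (add_mem (one_mem P) hq.mem)) h₁₄.inv_mem

lemma excess_two_dominatedBy (h : IsMonomialPair P q r) :
    DominatedBy P (weight q r) (excess q r (q * (q ^ 4 * r ^ 2) ^ 2))
      ((q + q ^ 7 * r ^ 3) * (1 - q ^ 7 * r ^ 3)⁻¹ * (1 - q ^ 2 * r ^ 2)⁻¹) := by
  obtain ⟨w₃, -, w₆⟩ := h.mem_absorbed_weight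
  have h₁₁ : HasGeomSeries P (q ^ 3 * r ^ 2 * (q ^ 6 * r ^ 2) * (q ^ 2 * r ^ 2)) := h.geom 11 6
  have excess_eq : excess q r (q * (q ^ 4 * r ^ 2) ^ 2) =
      q ^ 10 * r ^ 4 * (1 - q ^ 10 * r ^ 4)⁻¹ *
        (1 - q ^ 3 * r ^ 2 * (q ^ 6 * r ^ 2) * (q ^ 2 * r ^ 2))⁻¹ := by
    rw [excess]; ring
  have h₇ := h.geom 7 3 rfl
  rw [excess_eq]
  exact h.mul_inv_one_sub_dominatedBy.mul (.inv_one_sub (mul_mem w₃ w₆) (h.geom 2 2 rfl) h₁₁)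
    (mul_mem (add_mem (h.geom 1 0 (u := q)).mem h₇.mem) h₇.inv_mem) h₁₁.inv_mem

lemma excess_mul_pow_succ_dominatedBy (h : IsMonomialPair P q r) (j : ℕ) :
    DominatedBy P (weight q r) (excess q r (q * (q ^ 4 * r ^ 2) ^ (j + 1)))
      (excess q r ((q ^ 4 * r ^ 2) ^ j)) := by
  have shift : q * (q ^ 4 * r ^ 2) ^ (j + 1) = q ^ 5 * r ^ 2 * (q ^ 4 * r ^ 2) ^ j := by ring
  rw [shift]
  exact excess_dominatedBy h.mem_absorbed_weight.2.1 (h.geom (4 * j + 1) (2 * j))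
    (h.geom (4 * j + 6) (2 * j + 2)) (h.geom (4 * j + 2) (2 * j + 2))
    (h.geom (4 * j + 7) (2 * j + 4))

lemma inv_leftProd_two_sub_mem (h : IsMonomialPair P q r) :
    (leftProd q r 2)⁻¹ - majorant q r *
      (1 + (1 - r) * (1 - q * r) * excess q r (q * (q ^ 4 * r ^ 2) ^ 2)) ∈ P := by
  have remainder_mem : q ^ 3 * r * (1 + q) * ((1 - q ^ 6 * r ^ 4) * (1 - q ^ 6 * r ^ 2) *
      (1 - q ^ 5 * r ^ 2) * (1 - q ^ 2 * r ^ 2) * (1 - q ^ 7 * r ^ 3))⁻¹ ∈ P := by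
    simp only [mul_inv]
    exact mul_mem (mul_mem (h.geom 3 1).mem (add_mem (one_mem P) (h.geom 1 0).mem))
      (mul_mem (mul_mem (mul_mem (mul_mem (h.geom 6 4).inv_mem (h.geom 6 2).inv_mem)
        (h.geom 5 2).inv_mem) (h.geom 2 2).inv_mem) (h.geom 7 3).inv_mem)
  convert add_mem h.excess_two_dominatedBy (mul_mem h.one_sub_mul_inv_mem remainder_mem) using 1
  rw [h.inv_leftProd_two, ← h.majorant_mul]
  ring

lemma inv_leftProd_sub_mem (h : IsMonomialPair P q r) {L : ℕ} (hL : 2 ≤ L) :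
    (leftProd q r L)⁻¹ - majorant q r * (rightTail q r L)⁻¹ *
      (1 + (1 - r) * (1 - q * r) * excess q r (q * (q ^ 4 * r ^ 2) ^ L)) ∈ P := by
  induction L, hL using Nat.le_induction with
  | base =>
    simpa only [rightTail, Finset.Ico_self, Finset.prod_empty, inv_one, mul_one] using
      h.inv_leftProd_two_sub_mem
  | succ L hL ih =>
    have left_succ : (leftProd q r (L + 1))⁻¹ =
        (leftProd q r L)⁻¹ * (leftBlock q r ((q ^ 4 * r ^ 2) ^ L))⁻¹ := by
      rw [leftProd, Finset.prod_range_succ, mul_inv, leftProd]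
    have right_succ : (rightTail q r (L + 1))⁻¹ =
        (rightTail q r L)⁻¹ * (rightBlock q r ((q ^ 4 * r ^ 2) ^ L))⁻¹ := by
      rw [rightTail, Finset.prod_Ico_succ_top hL, mul_inv, rightTail]
    convert add_mem (mul_mem ih (h.inv_leftBlock_mem L))
      (mul_mem (h.excess_mul_pow_succ_dominatedBy L)
        (mul_mem (h.inv_rightTail_mem L) (h.inv_rightBlock_mem L))) using 1
    rw [left_succ, right_succ, ← h.majorant_mul]
    linear_combination (majorant q r * (rightTail q r L)⁻¹) *
      h.inv_leftBlock_mul_eq_inv_rightBlock_mul L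

lemma inv_leftProd_one_sub_mem (h : IsMonomialPair P q r) :
    (leftProd q r 1)⁻¹ - (rightProd q r 1)⁻¹ ∈ P := by
  have h₁₀ : 1 - q ≠ 0 := (h.geom 1 0).one_sub_ne_zero
  have h₁₁ : 1 - q * r ≠ 0 := (h.geom 1 1).one_sub_ne_zero
  have h₂₀ : 1 - q ^ 2 ≠ 0 := (h.geom 2 0).one_sub_ne_zero
  have h₃₁ : HasGeomSeries P (q ^ 3 * r) := h.geom 3 1
  have h₂₂ := h.geom 2 2 rfl
  have h₃₂ := h.geom 3 2 rfl
  have h₃₁₀ := h₃₁.one_sub_ne_zero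
  have h₂₂₀ := h₂₂.one_sub_ne_zero
  have h₃₂₀ := h₃₂.one_sub_ne_zero
  have difference : (leftProd q r 1)⁻¹ - (rightProd q r 1)⁻¹ =
      (1 - q ^ 2)⁻¹ * (1 - r) * (q * (1 + q ^ 2 * r) * ((1 - q ^ 3 * r)⁻¹ *
        (1 - q ^ 2 * r ^ 2)⁻¹ * (1 - q ^ 3 * r ^ 2)⁻¹)) := by
    simp only [leftProd, rightProd, leftBlock, rightBlock, Finset.prod_range_one, pow_zero, one_mul]
    field_simp
    ring
  rw [difference]
  exact mul_mem h.one_sub_mul_inv_mem (mul_mem (mul_mem (h.geom 1 0).mem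
    (add_mem (one_mem P) (h.geom 2 1).mem)) (mul_mem (mul_mem h₃₁.inv_mem h₂₂.inv_mem) h₃₂.inv_mem))

theorem inv_leftProd_sub_inv_rightProd_mem (h : IsMonomialPair P q r) :
    ∀ L : ℕ, (leftProd q r L)⁻¹ - (rightProd q r L)⁻¹ ∈ P
  | 0 => by simp only [leftProd, rightProd, Finset.prod_range_zero, sub_self, zero_mem]
  | 1 => h.inv_leftProd_one_sub_mem
  | L + 2 => by
    have split : rightProd q r (L + 2) = rightProd q r 2 * rightTail q r (L + 2) :=
      (Finset.prod_range_mul_prod_Ico _ (Nat.le_add_left 2 L)).symm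
    have tail_mem := h.inv_rightTail_mem (L + 2)
    convert add_mem (add_mem (h.inv_leftProd_sub_mem (Nat.le_add_left 2 L))
      (mul_mem (mul_mem h.weight_mem tail_mem) (h.excess_mul_pow_mem (L + 2))))
      (mul_mem h.majorant_sub_inv_rightProd_two_mem tail_mem) using 1
    rw [split, mul_inv, ← h.majorant_mul]
    ring

end IsMonomialPair

section Series

lemma exists_mul_one_sub_X_pow_eq_one (R : Type*) [CommRing R] {m : ℕ} (hm : 0 < m) :
    ∃ f : ℕ⟦X⟧, f.map (Nat.castRingHom R) * (1 - X ^ m) = 1 := by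
  refine ⟨mk fun n => if m ∣ n then 1 else 0, ?_⟩
  have expanded : (mk fun n => if m ∣ n then 1 else 0 : ℕ⟦X⟧).map (Nat.castRingHom R) =
      expand m hm.ne' (mk 1) := by
    ext n
    by_cases hmn : m ∣ n <;> simp [coeff_expand, hmn]
  rw [expanded, ← expand_X m hm.ne', ← map_one (expand m hm.ne'), ← map_sub, ← map_mul,
    mk_one_mul_one_sub_eq_one]

lemma constantCoeff_prod_block {R : Type*} [CommRing R] (s : Finset ℕ) {a b c : ℕ → ℕ}
    (ha : ∀ j, a j ≠ 0) (hb : ∀ j, b j ≠ 0) (hc : ∀ j, c j ≠ 0) :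
    constantCoeff (∏ j ∈ s, (1 - (X : R⟦X⟧) ^ a j) * ((1 - X ^ b j) * (1 - X ^ c j))) = 1 := by
  simp [map_prod, ha, hb, hc]

lemma algebraMap_inv {F : Type*} [Field F] [Algebra K⟦X⟧ F] {f : K⟦X⟧}
    (hf : constantCoeff f ≠ 0) : algebraMap K⟦X⟧ F f⁻¹ = (algebraMap K⟦X⟧ F f)⁻¹ :=
  eq_inv_of_mul_eq_one_right (by rw [← map_mul, PowerSeries.mul_inv_cancel f hf, map_one])

variable (K)

/-- The canonical map from power series with natural number coefficients to the field of fractions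
of `K⟦X⟧`; its range is the cone `P` of the application. -/
noncomputable def natSeriesHom : ℕ⟦X⟧ →+* FractionRing K⟦X⟧ :=
  (algebraMap K⟦X⟧ (FractionRing K⟦X⟧)).comp (PowerSeries.map (Nat.castRingHom K))

lemma hasGeomSeries_X_pow {m : ℕ} (hm : 0 < m) :
    HasGeomSeries (natSeriesHom K).rangeS (natSeriesHom K (X ^ m)) := by
  obtain ⟨f, hf⟩ := exists_mul_one_sub_X_pow_eq_one K hm
  have inverse : natSeriesHom K f * (1 - natSeriesHom K (X ^ m)) = 1 := by
    simpa [natSeriesHom] using congrArg (algebraMap K⟦X⟧ (FractionRing K⟦X⟧)) hf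
  exact ⟨⟨_, rfl⟩, right_ne_zero_of_mul_eq_one inverse, ⟨f, eq_inv_of_mul_eq_one_left inverse⟩⟩

lemma isMonomialPair_X (k : ℕ) :
    IsMonomialPair (natSeriesHom K).rangeS (natSeriesHom K X) (natSeriesHom K (X ^ (2 * k))) where
  hasGeomSeries_monomial {a} b ha := by
    have monomial_eq : natSeriesHom K X ^ a * natSeriesHom K (X ^ (2 * k)) ^ b =
        natSeriesHom K (X ^ (a + 2 * k * b)) := by
      rw [← map_pow, ← map_pow, ← map_mul, ← pow_mul, ← pow_add]
    rw [monomial_eq]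
    exact hasGeomSeries_X_pow K (Nat.add_pos_left ha _)
  right_mem_absorbed := by
    refine ⟨⟨_, rfl⟩, ∑ i ∈ Finset.range k, (X ^ 2) ^ i, ?_⟩
    have h := (hasGeomSeries_X_pow K two_pos).one_sub_ne_zero
    rw [map_pow] at h
    rw [eq_inv_mul_iff_mul_eq₀ h, map_sum]
    simp only [map_pow]
    rw [mul_neg_geom_sum, pow_mul]

lemma inv_leftProd_eq_algebraMap (L k : ℕ) :
    (leftProd (natSeriesHom K X) (natSeriesHom K (X ^ (2 * k))) L)⁻¹ =
      algebraMap K⟦X⟧ (FractionRing K⟦X⟧) (∏ j ∈ Finset.range L,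
        (1 - X ^ (1 + j * (2 * (2 * k + 1) + 2))) *
          ((1 - X ^ (2 * k + 1 + 2 + j * (2 * (2 * k + 1) + 2))) *
            (1 - X ^ (2 * (2 * k + 1) + j * (2 * (2 * k + 1) + 2)))))⁻¹ := by
  rw [algebraMap_inv
      ((constantCoeff_prod_block _ (by lia) (by lia) (by lia)).trans_ne one_ne_zero), map_prod,
    leftProd]
  refine congrArg (·⁻¹) (Finset.prod_congr rfl fun j _ => ?_)
  simp only [leftBlock, natSeriesHom, RingHom.comp_apply, map_pow, PowerSeries.map_X, map_mul,
    map_sub, map_one]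
  ring

lemma inv_rightProd_eq_algebraMap (L k : ℕ) :
    (rightProd (natSeriesHom K X) (natSeriesHom K (X ^ (2 * k))) L)⁻¹ =
      algebraMap K⟦X⟧ (FractionRing K⟦X⟧) (∏ j ∈ Finset.range L,
        (1 - X ^ (2 + j * (2 * (2 * k + 1) + 2))) *
          ((1 - X ^ (2 * k + 1 + j * (2 * (2 * k + 1) + 2))) *
            (1 - X ^ (2 * (2 * k + 1) + 1 + j * (2 * (2 * k + 1) + 2)))))⁻¹ := by
  rw [algebraMap_inv
      ((constantCoeff_prod_block _ (by lia) (by lia) (by lia)).trans_ne one_ne_zero), map_prod,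
    rightProd]
  refine congrArg (·⁻¹) (Finset.prod_congr rfl fun j _ => ?_)
  simp only [rightBlock, natSeriesHom, RingHom.comp_apply, map_pow, PowerSeries.map_X, map_mul,
    map_sub, map_one]
  ring

end Series

end BerkovichGrizzell

open BerkovichGrizzell in
theorem berkovich_grizzell_odd_y_general (K : Type*) [Field K] (L : ℕ) {y : ℕ} (hy : Odd y) :
    ∃ f : ℕ⟦X⟧, f.map (Nat.castRingHom K) =
      (∏ j ∈ Finset.range L,
          (1 - (X : K⟦X⟧) ^ (1 + j * (2 * y + 2))) *
          ((1 - X ^ (y + 2 + j * (2 * y + 2))) * (1 - X ^ (2 * y + j * (2 * y + 2)))))⁻¹ -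
      (∏ j ∈ Finset.range L,
          (1 - (X : K⟦X⟧) ^ (2 + j * (2 * y + 2))) *
          ((1 - X ^ (y + j * (2 * y + 2))) * (1 - X ^ (2 * y + 1 + j * (2 * y + 2)))))⁻¹ := by
  obtain ⟨k, rfl⟩ := hy
  obtain ⟨f, hf⟩ := (isMonomialPair_X K k).inv_leftProd_sub_inv_rightProd_mem L
  rw [inv_leftProd_eq_algebraMap, inv_rightProd_eq_algebraMap, ← map_sub] at hf
  exact ⟨f, IsFractionRing.injective K⟦X⟧ (FractionRing K⟦X⟧) hf⟩

theorem berkovich_grizzell_odd_y (L y : ℕ) (hL : 0 < L) (hy : 1 < y) (hyo : Odd y) (n : ℕ) :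
    0 ≤ PowerSeries.coeff (R := ℚ) n
      ((∏ j ∈ Finset.range L,
          (1 - (PowerSeries.X : PowerSeries ℚ) ^ (1 + j * (2 * y + 2))) *
          ((1 - (PowerSeries.X : PowerSeries ℚ) ^ (y + 2 + j * (2 * y + 2))) *
           (1 - (PowerSeries.X : PowerSeries ℚ) ^ (2 * y + j * (2 * y + 2)))))⁻¹ -
       (∏ j ∈ Finset.range L,
          (1 - (PowerSeries.X : PowerSeries ℚ) ^ (2 + j * (2 * y + 2))) *
          ((1 - (PowerSeries.X : PowerSeries ℚ) ^ (y + j * (2 * y + 2))) *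
           (1 - (PowerSeries.X : PowerSeries ℚ) ^ (2 * y + 1 + j * (2 * y + 2)))))⁻¹) := by
  obtain ⟨f, hf⟩ := berkovich_grizzell_odd_y_general ℚ L hyo
  rw [← hf, coeff_map]
  exact Nat.cast_nonneg (coeff n f)
end

section
/- (Berkovich–Grizzell) Let L > 0 be an integer, let y > 1 be an odd integer, and for all positive integers n with largest part bounded as follows: for every integer n, the number of partitions of n into parts congruent to 1, y+2, or 2y modulo 2y+2 with every part less than (2y+2)L is greater than or equal to the number of partitions of n into parts congruent to 2, y, or 2y+1 modulo 2y+2 with every part less than (2y+2)L; that is, P1(L, y, n) ≥ P2(L, y, n). -/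
/-!
Put `c = y - 1` and let `J ⊆ I` consist of the first `L` and the first `2 * L` numbers congruent to
`1` modulo `y + 1`; all of them are odd and `1 ∈ J`. The parts counted on the right are `2 * a` with
`a ∈ J` and `a + c` with `a ∈ I`; the parts counted on the left are `a` with `a ∈ I` and
`2 * (a + c)` with `a ∈ J`. Split every `2 * a` into `a + a`, merge equal parts `a + c` with `a ∈ J`
in pairs, and break each `a + c` that remains into `a` and `c` ones. This can be undone: the even
parts are the merged pairs, and since `c` is even, the parity of the multiplicity of `a ∈ J` tells
whether an `a + c` was left unmerged, while each `a ∈ I` outside `J` comes from exactly one `a + c`.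
-/

namespace BerkovichGrizzell

variable {I J : Set ℕ}

/-- The data of a partition into parts `2 * a` with `a ∈ J` and `a + c` with `a ∈ I`, once equal
parts `a + c` with `a ∈ J` have been paired off: each field lists the values `a`. The shift `c` is
not part of the data. -/
@[ext]
structure PairedParts (I J : Set ℕ) where
  /-- The `a` for the parts `2 * a`. -/
  halves : Multiset ℕ
  /-- The `a` for the parts `a + c` not belonging to a pair. -/
  singles : Multiset ℕ
  /-- The `a` for the pairs of parts `a + c`, one entry for each pair. -/
  pairs : Multiset ℕ
  mem_of_mem_halves : ∀ a ∈ halves, a ∈ J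
  mem_of_mem_singles : ∀ a ∈ singles, a ∈ I
  mem_of_mem_pairs : ∀ a ∈ pairs, a ∈ J
  count_singles_le_one : ∀ a ∈ J, singles.count a ≤ 1

namespace PairedParts

/-- The partition, as a multiset of parts, that the data describe. -/
def source (c : ℕ) (d : PairedParts I J) : Multiset ℕ :=
  d.halves.map (2 * ·) + d.singles.map (· + c) + 2 • d.pairs.map (· + c)

/-- What the halved parts and the unpaired parts become: two copies of `a` for each part `2 * a`,
and `a` together with `c` ones for each unpaired part `a + c`. -/
def splitParts (c : ℕ) (d : PairedParts I J) : Multiset ℕ :=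
  2 • d.halves + d.singles + Multiset.replicate (c * d.singles.card) 1

/-- The image of `PairedParts.source` under the injection: the split parts, and `2 * (a + c)` for
each pair of parts `a + c`. -/
def target (c : ℕ) (d : PairedParts I J) : Multiset ℕ :=
  d.splitParts c + d.pairs.map fun a ↦ 2 * (a + c)

theorem sum_target (c : ℕ) (d : PairedParts I J) : (d.target c).sum = (d.source c).sum := by
  have hhalves : (d.halves.map (2 * ·)).sum = 2 * d.halves.sum := by
    rw [Multiset.sum_map_mul_left, Multiset.map_id']
  simp only [target, splitParts, source, Multiset.sum_add, Multiset.sum_nsmul,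
    Multiset.sum_map_mul_left, Multiset.sum_map_add, Multiset.map_id', Multiset.map_const',
    Multiset.sum_replicate, smul_eq_mul, hhalves]
  ring

theorem exists_source_eq {c : ℕ} (s : Multiset ℕ)
    (hs : ∀ x ∈ s, (∃ a ∈ J, x = 2 * a) ∨ ∃ a ∈ I, x = a + c) :
    ∃ d : PairedParts I J, d.source c = s := by
  induction s using Multiset.induction_on with
  | empty => exact ⟨⟨0, 0, 0, by simp, by simp, by simp, by simp⟩, by simp [source]⟩
  | cons x s ih =>
    obtain ⟨hx, hs⟩ := Multiset.forall_mem_cons.1 hs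
    obtain ⟨⟨α, ε, π, hα, hε, hπ, hε_one⟩, rfl⟩ := ih hs
    obtain ⟨a, ha, rfl⟩ | ⟨a, ha, rfl⟩ := hx
    · exact ⟨⟨a ::ₘ α, ε, π, Multiset.forall_mem_cons.2 ⟨ha, hα⟩, hε, hπ, hε_one⟩,
        by simp [source]⟩
    by_cases hpair : a ∈ J ∧ a ∈ ε
    · obtain ⟨haJ, haε⟩ := hpair
      obtain ⟨ε, rfl⟩ := Multiset.exists_cons_of_mem haε
      refine ⟨⟨α, ε, a ::ₘ π, hα, (Multiset.forall_mem_cons.1 hε).2,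
        Multiset.forall_mem_cons.2 ⟨haJ, hπ⟩,
        fun b hb ↦ (Multiset.count_le_count_cons ..).trans (hε_one b hb)⟩, ?_⟩
      simp only [source, Multiset.map_cons]
      simp only [← Multiset.singleton_add]
      abel
    · refine ⟨⟨α, a ::ₘ ε, π, hα, Multiset.forall_mem_cons.2 ⟨ha, hε⟩, hπ, fun b hb ↦ ?_⟩,
        by simp [source]⟩
      obtain rfl | hba := eq_or_ne b a
      · rw [Multiset.count_cons_self, Multiset.count_eq_zero_of_notMem fun h ↦ hpair ⟨hb, h⟩]
      · rw [Multiset.count_cons_of_ne hba]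
        exact hε_one b hb

theorem mem_of_mem_splitParts (hJI : J ⊆ I) (hJ : 1 ∈ J) {c : ℕ} {d : PairedParts I J} {x : ℕ}
    (hx : x ∈ d.splitParts c) : x ∈ I := by
  simp only [splitParts, Multiset.mem_add] at hx
  obtain (hx | hx) | hx := hx
  · exact hJI (d.mem_of_mem_halves x (Multiset.mem_of_mem_nsmul hx))
  · exact d.mem_of_mem_singles x hx
  · exact Multiset.eq_of_mem_replicate hx ▸ hJI hJ

theorem mem_or_exists_of_mem_target (hJI : J ⊆ I) (hJ : 1 ∈ J) {c : ℕ} {d : PairedParts I J}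
    {x : ℕ} (hx : x ∈ d.target c) : x ∈ I ∨ ∃ a ∈ J, x = 2 * (a + c) := by
  obtain hx | hx := Multiset.mem_add.1 hx
  · exact .inl (mem_of_mem_splitParts hJI hJ hx)
  · obtain ⟨a, ha, rfl⟩ := Multiset.mem_map.1 hx
    exact .inr ⟨a, d.mem_of_mem_pairs a ha, rfl⟩

theorem filter_even_target (hJI : J ⊆ I) (hI : ∀ a ∈ I, Odd a) (hJ : 1 ∈ J) (c : ℕ)
    (d : PairedParts I J) :
    (d.target c).filter Even = d.pairs.map fun a ↦ 2 * (a + c) := by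
  have hsplit : (d.splitParts c).filter Even = 0 := Multiset.filter_eq_nil.2 fun x hx ↦
    Nat.not_even_iff_odd.2 (hI x (mem_of_mem_splitParts hJI hJ hx))
  have hpairs : (d.pairs.map fun a ↦ 2 * (a + c)).filter Even = d.pairs.map fun a ↦ 2 * (a + c) :=
    Multiset.filter_eq_self.2 fun x hx ↦ by
      obtain ⟨a, -, rfl⟩ := Multiset.mem_map.1 hx
      exact even_two_mul _
  rw [target, Multiset.filter_add, hsplit, hpairs, zero_add]

theorem count_singles_of_mem {c : ℕ} (hc : Even c) (d : PairedParts I J) {a : ℕ} (ha : a ∈ J) :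
    d.singles.count a = (d.splitParts c).count a % 2 := by
  have hones : Even ((Multiset.replicate (c * d.singles.card) 1).count a) := by
    rw [Multiset.count_replicate]
    split_ifs
    · exact hc.mul_right _
    · exact Even.zero
  have hle := d.count_singles_le_one a ha
  obtain ⟨r, hr⟩ := hones
  rw [splitParts, Multiset.count_add, Multiset.count_add, Multiset.count_nsmul, hr]
  omega

theorem count_singles_of_notMem (hJ : 1 ∈ J) (c : ℕ) (d : PairedParts I J) {a : ℕ} (ha : a ∉ J) :
    d.singles.count a = (d.splitParts c).count a := by
  have hhalves : d.halves.count a = 0 :=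
    Multiset.count_eq_zero_of_notMem fun h ↦ ha (d.mem_of_mem_halves a h)
  have ha_one : 1 ≠ a := by
    rintro rfl
    exact ha hJ
  rw [splitParts, Multiset.count_add, Multiset.count_add, Multiset.count_nsmul, hhalves,
    Multiset.count_replicate, if_neg ha_one, mul_zero, zero_add, add_zero]

theorem singles_eq_of_splitParts_eq (hJ : 1 ∈ J) {c : ℕ} (hc : Even c) {d e : PairedParts I J}
    (h : d.splitParts c = e.splitParts c) : d.singles = e.singles := by
  ext a
  by_cases ha : a ∈ J
  · rw [count_singles_of_mem hc d ha, count_singles_of_mem hc e ha, h]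
  · rw [count_singles_of_notMem hJ c d ha, count_singles_of_notMem hJ c e ha, h]

theorem target_injective (hJI : J ⊆ I) (hI : ∀ a ∈ I, Odd a) (hJ : 1 ∈ J) {c : ℕ} (hc : Even c) :
    Function.Injective (target c : PairedParts I J → Multiset ℕ) := by
  intro d e h
  have hmap : (d.pairs.map fun a ↦ 2 * (a + c)) = e.pairs.map fun a ↦ 2 * (a + c) := by
    rw [← filter_even_target hJI hI hJ, ← filter_even_target hJI hI hJ, h]
  have hpairs : d.pairs = e.pairs := Multiset.map_injective (fun a b hab ↦ by simpa using hab) hmap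
  have hsplit : d.splitParts c = e.splitParts c := by
    rw [target, target, hmap] at h
    exact add_right_cancel h
  have hsingles : d.singles = e.singles := singles_eq_of_splitParts_eq hJ hc hsplit
  have hhalves : d.halves = e.halves := by
    rw [splitParts, splitParts, hsingles] at hsplit
    exact nsmul_right_injective two_ne_zero (add_right_cancel (add_right_cancel hsplit))
  exact PairedParts.ext hhalves hsingles hpairs

end PairedParts

open PairedParts in
theorem card_restricted_le_card_restricted (hJI : J ⊆ I) (hI : ∀ a ∈ I, Odd a) (hJ : 1 ∈ J)
    {c : ℕ} (hc : Even c) {P Q : ℕ → Prop} [DecidablePred P] [DecidablePred Q]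
    (hP : ∀ x, P x → (∃ a ∈ J, x = 2 * a) ∨ ∃ a ∈ I, x = a + c)
    (hQI : ∀ a ∈ I, Q a) (hQJ : ∀ a ∈ J, Q (2 * (a + c))) (n : ℕ) :
    (Nat.Partition.restricted n P).card ≤ (Nat.Partition.restricted n Q).card := by
  refine Finset.card_le_card_of_forall_subsingleton
    (fun p q ↦ ∃ d : PairedParts I J, d.source c = p.parts ∧ d.target c = q.parts) ?_ ?_
  · intro p hp
    obtain ⟨d, hd⟩ := exists_source_eq p.parts fun x hx ↦ hP x ((Finset.mem_filter.1 hp).2 x hx)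
    have htarget {x : ℕ} (hx : x ∈ d.target c) : 0 < x ∧ Q x := by
      obtain hx | ⟨a, ha, rfl⟩ := mem_or_exists_of_mem_target hJI hJ hx
      · exact ⟨(hI x hx).pos, hQI x hx⟩
      · exact ⟨by have := (hI a (hJI ha)).pos; omega, hQJ a ha⟩
    refine ⟨⟨d.target c, fun hx ↦ (htarget hx).1, ?_⟩, ?_, d, hd, rfl⟩
    · rw [sum_target, hd, p.parts_sum]
    · exact Finset.mem_filter.2 ⟨Finset.mem_univ _, fun x hx ↦ (htarget hx).2⟩
  · rintro q - p ⟨-, d, hp, hd⟩ p' ⟨-, e, hp', he⟩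
    obtain rfl : d = e := target_injective hJI hI hJ hc (hd.trans he.symm)
    exact Nat.Partition.ext (hp.symm.trans hp')

/-- The first `N` positive integers congruent to `1` modulo `m`. -/
def oneModParts (m N : ℕ) : Set ℕ := (fun j ↦ m * j + 1) '' Set.Iio N

theorem oneModParts_mono (m : ℕ) : Monotone (oneModParts m) :=
  fun _ _ h ↦ Set.image_mono (Set.Iio_subset_Iio h)

theorem one_mem_oneModParts (m : ℕ) {N : ℕ} (hN : 0 < N) : 1 ∈ oneModParts m N :=
  ⟨0, hN, rfl⟩

theorem odd_of_mem_oneModParts {m N a : ℕ} (hm : Even m) (ha : a ∈ oneModParts m N) : Odd a := by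
  obtain ⟨j, -, rfl⟩ := ha
  exact (hm.mul_right j).add_one

theorem exists_eq_mul_add_of_mod_eq {m L x r : ℕ} (hx : x < m * L) (hr : x % m = r) :
    ∃ q < L, x = m * q + r :=
  ⟨x / m, Nat.div_lt_of_lt_mul hx, hr ▸ (Nat.div_add_mod x m).symm⟩

theorem mul_add_mod_eq_and_lt {m L q r : ℕ} (hq : q < L) (hr : r < m) :
    (m * q + r) % m = r ∧ m * q + r < m * L := by
  rw [Nat.mul_add_mod_self_left, Nat.mod_eq_of_lt hr, mul_comm m L]
  exact ⟨rfl, Nat.mul_add_lt_mul_of_lt_of_lt hq hr⟩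

section Residues

variable {c L x : ℕ}

theorem exists_oneModParts_of_mod_eq
    (h : (x % (2 * (c + 1) + 2) = 2 ∨ x % (2 * (c + 1) + 2) = c + 1 ∨
      x % (2 * (c + 1) + 2) = 2 * (c + 1) + 1) ∧ x < (2 * (c + 1) + 2) * L) :
    (∃ a ∈ oneModParts (c + 2) L, x = 2 * a) ∨
      ∃ a ∈ oneModParts (c + 2) (2 * L), x = a + c := by
  obtain ⟨hr | hr | hr, hx⟩ := h <;> obtain ⟨q, hq, rfl⟩ := exists_eq_mul_add_of_mod_eq hx hr
  · exact .inl ⟨_, ⟨q, hq, rfl⟩, by ring⟩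
  · exact .inr ⟨_, ⟨2 * q, Set.mem_Iio.2 (by omega), rfl⟩, by ring⟩
  · exact .inr ⟨_, ⟨2 * q + 1, Set.mem_Iio.2 (by omega), rfl⟩, by ring⟩

theorem mod_eq_of_mem_oneModParts (hx : x ∈ oneModParts (c + 2) (2 * L)) :
    (x % (2 * (c + 1) + 2) = 1 ∨ x % (2 * (c + 1) + 2) = c + 1 + 2) ∧
      x < (2 * (c + 1) + 2) * L := by
  obtain ⟨j, (hj : j < 2 * L), (rfl : (c + 2) * j + 1 = x)⟩ := hx
  obtain ⟨q, rfl | rfl⟩ := j.even_or_odd'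
  · have hx : (c + 2) * (2 * q) + 1 = (2 * (c + 1) + 2) * q + 1 := by ring
    exact hx ▸ (mul_add_mod_eq_and_lt (by omega) (by omega)).imp_left .inl
  · have hx : (c + 2) * (2 * q + 1) + 1 = (2 * (c + 1) + 2) * q + (c + 1 + 2) := by ring
    exact hx ▸ (mul_add_mod_eq_and_lt (by omega) (by omega)).imp_left .inr

theorem two_mul_add_mod_eq_of_mem_oneModParts (hx : x ∈ oneModParts (c + 2) L) :
    2 * (x + c) % (2 * (c + 1) + 2) = 2 * (c + 1) ∧ 2 * (x + c) < (2 * (c + 1) + 2) * L := by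
  obtain ⟨q, hq, rfl⟩ := hx
  have hx : 2 * ((c + 2) * q + 1 + c) = (2 * (c + 1) + 2) * q + 2 * (c + 1) := by ring
  exact hx ▸ mul_add_mod_eq_and_lt hq (by omega)

end Residues

end BerkovichGrizzell

theorem berkovich_grizzell_partition_inequality (L y : ℕ) (hL : 0 < L)
    (hy : 1 < y) (hyo : Odd y) (n : ℕ) :
    (Finset.univ.filter (fun p : Nat.Partition n =>
        ∀ x ∈ p.parts, (x % (2 * y + 2) = 1 ∨ x % (2 * y + 2) = y + 2 ∨
          x % (2 * y + 2) = 2 * y) ∧ x < (2 * y + 2) * L)).card ≥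
    (Finset.univ.filter (fun p : Nat.Partition n =>
        ∀ x ∈ p.parts, (x % (2 * y + 2) = 2 ∨ x % (2 * y + 2) = y ∨
          x % (2 * y + 2) = 2 * y + 1) ∧ x < (2 * y + 2) * L)).card := by
  open BerkovichGrizzell in
  obtain ⟨k, rfl⟩ := hyo
  exact card_restricted_le_card_restricted (c := 2 * k)
    (oneModParts_mono (2 * k + 2) (by omega : L ≤ 2 * L))
    (fun _ ↦ odd_of_mem_oneModParts ((even_two_mul k).add even_two))
    (one_mem_oneModParts _ hL) (even_two_mul k)
    (fun _ ↦ exists_oneModParts_of_mod_eq)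
    (fun _ ha ↦ (mod_eq_of_mem_oneModParts ha).imp_left (Or.imp_right .inl))
    (fun _ ha ↦ (two_mul_add_mod_eq_of_mem_oneModParts ha).imp_left fun h ↦ .inr (.inr h)) n
end

section
/- (Berkovich–Grizzell) Let m, n, y, z be positive integers with gcd(n, y) = 1, and let K, L be integers with K ≥ L ≥ 0. In the ring of formal power series over ℚ in one variable q, write a(k) for the coefficients of ((∏_{j=0}^{K−1} (1 − q^{z+jm})) · (∏_{j=0}^{L−1} (1 − q^{nyz+jnm})))⁻¹ − ((∏_{j=0}^{K−1} (1 − q^{yz+jm})) · (∏_{j=0}^{L−1} (1 − q^{nz+jnm})))⁻¹ = Σ_{k≥0} a(k) q^k. Then a(k) ≥ 0 for all k ≥ 0. -/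
open PowerSeries

/-!
Write `g e = 1 / (1 - q ^ e)` and pair the exponents `u = z + j m` and `v = u + (y - 1) z`.
Replacing `g u * g (n v)` by `g v * g (n u)`, or `g u` by `g v`, may raise some coefficients, but
no longer does so once everything is multiplied by `g z`, because `q ^ a - q ^ (a + c z)` is
divisible by `1 - q ^ z` with nonnegative quotient. Such comparisons can be multiplied together.
The factor with `j = 0` contains the required `g z`; its own comparison holds without any extra
factor because, `n` and `y` being coprime, a number has at most one representation `y i + n t` with
`i < n`.
-/

namespace BerkovichGrizzell

section Semiring

variable (R : Type*) [Semiring R]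

/-- The geometric series `1 + q ^ e + q ^ (2 * e) + ⋯`, which for `0 < e` is the inverse of
`1 - q ^ e`. It is given by its coefficients so as to make sense over any semiring; for `e = 0` it
is `1`. -/
def geomSeries (e : ℕ) : R⟦X⟧ :=
  mk fun k => if e ∣ k then 1 else 0

lemma coeff_geomSeries (e k : ℕ) :
    coeff k (geomSeries R e) = if e ∣ k then 1 else 0 :=
  coeff_mk k _

lemma coeff_X_pow_mul_geomSeries (a e k : ℕ) :
    coeff k (X ^ a * geomSeries R e) = if a ≤ k ∧ a ≡ k [MOD e] then 1 else 0 := by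
  rw [coeff_X_pow_mul', coeff_geomSeries, ite_and]
  by_cases hak : a ≤ k
  · simp only [hak, Nat.modEq_iff_dvd']
  · simp only [hak, if_false]

variable [PartialOrder R] [IsOrderedRing R]

/-- The power series all of whose coefficients are nonnegative. Being a subsemiring, it supplies the
closure of coefficientwise nonnegativity under finite sums and products. -/
def nonnegCoeff : Subsemiring R⟦X⟧ where
  carrier := {f | ∀ k, 0 ≤ coeff k f}
  zero_mem' k := by simp
  one_mem' k := by rw [coeff_one]; split_ifs <;> simp
  add_mem' hf hg k := by rw [map_add]; exact add_nonneg (hf k) (hg k)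
  mul_mem' hf hg k := by
    rw [coeff_mul]
    exact Finset.sum_nonneg fun p _ => mul_nonneg (hf p.1) (hg p.2)

lemma X_pow_mem_nonnegCoeff (e : ℕ) : (X : R⟦X⟧) ^ e ∈ nonnegCoeff R := by
  intro k
  rw [coeff_X_pow]
  split_ifs <;> simp

lemma geomSeries_mem_nonnegCoeff (e : ℕ) : geomSeries R e ∈ nonnegCoeff R := by
  intro k
  rw [coeff_geomSeries]
  split_ifs <;> simp

end Semiring

section CommRing

variable (R : Type*) [CommRing R]

lemma geomSeries_mul_one_sub_X_pow {e : ℕ} (he : 0 < e) :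
    geomSeries R e * (1 - X ^ e) = 1 := by
  ext k
  rw [mul_sub, mul_one, mul_comm _ (X ^ e), map_sub, coeff_X_pow_mul_geomSeries, coeff_geomSeries,
    coeff_one]
  have hdvd : e ≡ k [MOD e] ↔ e ∣ k := by
    simp [Nat.ModEq, eq_comm, Nat.dvd_iff_mod_eq_zero]
  rcases k.eq_zero_or_pos with rfl | hk
  · simp [he.ne']
  · have hle : e ∣ k → e ≤ k := Nat.le_of_dvd hk
    simp [hdvd, hk.ne', and_iff_right_of_imp hle]

lemma geom_sum_X_pow_mul_one_sub (n e : ℕ) :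
    (∑ i ∈ Finset.range n, (X : R⟦X⟧) ^ (e * i)) * (1 - X ^ e) = 1 - X ^ (n * e) := by
  simpa only [← pow_mul, mul_comm n e] using geom_sum_mul_neg ((X : R⟦X⟧) ^ e) n

lemma one_sub_X_pow_mul_mul_geomSeries {e : ℕ} (he : 0 < e) (n : ℕ) :
    (1 - X ^ (n * e)) * geomSeries R e = ∑ i ∈ Finset.range n, X ^ (e * i) := by
  rw [← geom_sum_X_pow_mul_one_sub, mul_assoc, mul_comm (1 - X ^ e),
    geomSeries_mul_one_sub_X_pow R he, mul_one]

lemma geomSeries_eq_geom_sum_mul {n e : ℕ} (hn : 0 < n) (he : 0 < e) :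
    geomSeries R e = (∑ i ∈ Finset.range n, X ^ (e * i)) * geomSeries R (n * e) := by
  rw [← one_sub_X_pow_mul_mul_geomSeries R he, mul_right_comm, mul_comm (1 - X ^ (n * e)),
    geomSeries_mul_one_sub_X_pow R (Nat.mul_pos hn he), one_mul]

lemma geomSeries_sub_geomSeries {a b : ℕ} (ha : 0 < a) (hb : 0 < b) :
    geomSeries R a - geomSeries R b = geomSeries R a * geomSeries R b * (X ^ a - X ^ b) := by
  linear_combination geomSeries R b * geomSeries_mul_one_sub_X_pow R ha -
    geomSeries R a * geomSeries_mul_one_sub_X_pow R hb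

lemma prod_one_sub_X_pow_inv {ι 𝕜 : Type*} [Field 𝕜] (s : Finset ι) {f : ι → ℕ}
    (hf : ∀ i ∈ s, 0 < f i) :
    (∏ i ∈ s, (1 - (X : 𝕜⟦X⟧) ^ f i))⁻¹ = ∏ i ∈ s, geomSeries 𝕜 (f i) := by
  refine ((PowerSeries.eq_inv_iff_mul_eq_one ?_).mpr ?_).symm
  · rw [map_prod]
    exact Finset.prod_ne_zero_iff.mpr fun i hi => by simp [(hf i hi).ne']
  · rw [← Finset.prod_mul_distrib]
    exact Finset.prod_eq_one fun i hi => geomSeries_mul_one_sub_X_pow 𝕜 (hf i hi)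

end CommRing

lemma card_filter_mul_modEq_le {n y z : ℕ} (hz : 0 < z) (hny : n.Coprime y) (k : ℕ) :
    Finset.card {i ∈ Finset.range n | y * z * i ≤ k ∧ y * z * i ≡ k [MOD n * z]} ≤
      if z ∣ k then 1 else 0 := by
  split_ifs with hzk
  · rw [Finset.card_le_one]
    intro i hi j hj
    simp only [Finset.mem_filter, Finset.mem_range] at hi hj
    have hz_mul : y * i * z ≡ y * j * z [MOD n * z] := by
      simpa only [mul_right_comm] using hi.2.2.trans hj.2.2.symm
    have hy_mul : y * i ≡ y * j [MOD n] := hz_mul.mul_right_cancel' hz.ne'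
    exact (hy_mul.cancel_left_of_coprime hny).eq_of_lt_of_lt hi.1 hj.1
  · rw [Nat.le_zero, Finset.card_eq_zero, Finset.filter_eq_empty_iff]
    rintro i - ⟨-, hik⟩
    have hzi : z ∣ y * z * i := Dvd.dvd.mul_right (Dvd.intro_left y rfl) i
    exact hzk ((hik.dvd_iff (Dvd.intro_left n rfl)).mp hzi)

lemma geomSeries_sub_mem_of_dvd (R : Type*) [Ring R] [PartialOrder R] [IsOrderedRing R]
    {d e : ℕ} (hde : d ∣ e) :
    geomSeries R d - geomSeries R e ∈ nonnegCoeff R := by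
  intro k
  rw [map_sub, sub_nonneg, coeff_geomSeries, coeff_geomSeries]
  have : e ∣ k → d ∣ k := hde.trans
  split_ifs <;> simp_all

section OrderedCommRing

variable (R : Type*) [CommRing R] [PartialOrder R] [IsOrderedRing R]

lemma X_pow_sub_mul_geomSeries_mem {z : ℕ} (hz : 0 < z) (a c : ℕ) :
    (X ^ a - X ^ (a + c * z)) * geomSeries R z ∈ nonnegCoeff R := by
  rw [show (X : R⟦X⟧) ^ a - X ^ (a + c * z) = X ^ a * (1 - X ^ (c * z)) by ring, mul_assoc,
    one_sub_X_pow_mul_mul_geomSeries R hz]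
  exact mul_mem (X_pow_mem_nonnegCoeff R a) (sum_mem fun i _ => X_pow_mem_nonnegCoeff R _)

lemma geomSeries_mul_sub_mem_of_coprime {n y z : ℕ} (hn : 0 < n) (hy : 0 < y) (hz : 0 < z)
    (hny : n.Coprime y) :
    geomSeries R z * geomSeries R (n * (y * z)) - geomSeries R (y * z) * geomSeries R (n * z) ∈
      nonnegCoeff R := by
  have hsum : geomSeries R z -
      (∑ i ∈ Finset.range n, X ^ (y * z * i)) * geomSeries R (n * z) ∈ nonnegCoeff R := by
    intro k
    rw [map_sub, sub_nonneg, Finset.sum_mul, map_sum, coeff_geomSeries]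
    simp only [coeff_X_pow_mul_geomSeries]
    rw [Finset.sum_boole]
    exact_mod_cast Nat.mono_cast (α := R) (card_filter_mul_modEq_le hz hny k)
  rw [geomSeries_eq_geom_sum_mul R hn (Nat.mul_pos hy hz), mul_right_comm, ← sub_mul]
  exact mul_mem hsum (geomSeries_mem_nonnegCoeff R _)

end OrderedCommRing

section DominatesAfter

variable {R : Type*} [CommRing R] [PartialOrder R] [IsOrderedRing R]

/-- The series `a` and `b` have nonnegative coefficients, and `a` dominates `b` coefficientwise
after both are multiplied by `w`. Unlike plain nonnegativity of `a - b`, this lets one factor `w`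
pay for a whole product of comparisons. -/
structure DominatesAfter (w a b : R⟦X⟧) : Prop where
  left_mem : a ∈ nonnegCoeff R
  right_mem : b ∈ nonnegCoeff R
  sub_mul_mem : (a - b) * w ∈ nonnegCoeff R

namespace DominatesAfter

variable {w a b a' b' : R⟦X⟧}

lemma mul (h : DominatesAfter w a b) (h' : DominatesAfter w a' b') :
    DominatesAfter w (a * a') (b * b') where
  left_mem := mul_mem h.left_mem h'.left_mem
  right_mem := mul_mem h.right_mem h'.right_mem
  sub_mul_mem := by
    rw [show (a * a' - b * b') * w = a * ((a' - b') * w) + (a - b) * w * b' by ring]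
    exact add_mem (mul_mem h.left_mem h'.sub_mul_mem) (mul_mem h.sub_mul_mem h'.right_mem)

lemma prod {ι : Type*} (s : Finset ι) {f g : ι → R⟦X⟧}
    (h : ∀ i ∈ s, DominatesAfter w (f i) (g i)) :
    DominatesAfter w (∏ i ∈ s, f i) (∏ i ∈ s, g i) := by
  classical
  induction s using Finset.induction_on with
  | empty => exact ⟨by simp, by simp, by simp⟩
  | insert i s hi ih =>
    rw [Finset.forall_mem_insert] at h
    simpa only [Finset.prod_insert hi] using h.1.mul (ih h.2)

lemma mul_sub_mul_mem (h : DominatesAfter w a b) {r s : R⟦X⟧} (hr : r ∈ nonnegCoeff R)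
    (hrs : w * r - s ∈ nonnegCoeff R) : a * (w * r) - b * s ∈ nonnegCoeff R := by
  rw [show a * (w * r) - b * s = (a - b) * w * r + b * (w * r - s) by ring]
  exact add_mem (mul_mem h.sub_mul_mem hr) (mul_mem h.right_mem hrs)

end DominatesAfter

lemma dominatesAfter_geomSeries {z u : ℕ} (hz : 0 < z) (hu : 0 < u) (c : ℕ) :
    DominatesAfter (geomSeries R z) (geomSeries R u) (geomSeries R (u + c * z)) where
  left_mem := geomSeries_mem_nonnegCoeff R _
  right_mem := geomSeries_mem_nonnegCoeff R _
  sub_mul_mem := by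
    rw [geomSeries_sub_geomSeries R hu (Nat.add_pos_left hu _), mul_assoc]
    exact mul_mem (mul_mem (geomSeries_mem_nonnegCoeff R _) (geomSeries_mem_nonnegCoeff R _))
      (X_pow_sub_mul_geomSeries_mem R hz u c)

lemma dominatesAfter_geomSeries_mul {z u n : ℕ} (hz : 0 < z) (hu : 0 < u) (hn : 0 < n) (c : ℕ) :
    DominatesAfter (geomSeries R z) (geomSeries R u * geomSeries R (n * (u + c * z)))
      (geomSeries R (u + c * z) * geomSeries R (n * u)) where
  left_mem := mul_mem (geomSeries_mem_nonnegCoeff R _) (geomSeries_mem_nonnegCoeff R _)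
  right_mem := mul_mem (geomSeries_mem_nonnegCoeff R _) (geomSeries_mem_nonnegCoeff R _)
  sub_mul_mem := by
    have hfactor : (geomSeries R u * geomSeries R (n * (u + c * z)) -
          geomSeries R (u + c * z) * geomSeries R (n * u)) * geomSeries R z =
        geomSeries R (n * u) * geomSeries R (n * (u + c * z)) *
          ∑ i ∈ Finset.range n, (X ^ (u * i) - X ^ (u * i + c * i * z)) * geomSeries R z := by
      have hexp (i : ℕ) : u * i + c * i * z = (u + c * z) * i := by ring
      simp only [hexp]
      rw [geomSeries_eq_geom_sum_mul R hn hu,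
        geomSeries_eq_geom_sum_mul R hn (Nat.add_pos_left hu (c * z)),
        ← Finset.sum_mul, Finset.sum_sub_distrib]
      ring
    rw [hfactor]
    exact mul_mem (mul_mem (geomSeries_mem_nonnegCoeff R _) (geomSeries_mem_nonnegCoeff R _))
      (sum_mem fun i _ => X_pow_sub_mul_geomSeries_mem R hz _ _)

end DominatesAfter

theorem prod_geomSeries_sub_mem_nonnegCoeff (R : Type*) [CommRing R] [PartialOrder R]
    [IsOrderedRing R] {n u c : ℕ → ℕ} {K L : ℕ} (hn : ∀ j, 0 < n j) (hu : ∀ j, 0 < u j)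
    (hnc : (n 0).Coprime (c 0 + 1)) (hKL : L ≤ K) :
    (∏ j ∈ Finset.range K, geomSeries R (u j)) *
        ∏ j ∈ Finset.range L, geomSeries R (n j * (u j + c j * u 0)) -
      (∏ j ∈ Finset.range K, geomSeries R (u j + c j * u 0)) *
        ∏ j ∈ Finset.range L, geomSeries R (n j * u j) ∈ nonnegCoeff R := by
  have prod_range_L (f : ℕ → R⟦X⟧) :
      ∏ j ∈ Finset.range L, f j = ∏ j ∈ Finset.range K, if j < L then f j else 1 := by
    rw [← Finset.prod_filter]
    congr 1
    grind
  rw [prod_range_L, prod_range_L, ← Finset.prod_mul_distrib, ← Finset.prod_mul_distrib]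
  have hdom (j : ℕ) : DominatesAfter (geomSeries R (u 0))
      (geomSeries R (u j) * if j < L then geomSeries R (n j * (u j + c j * u 0)) else 1)
      (geomSeries R (u j + c j * u 0) * if j < L then geomSeries R (n j * u j) else 1) := by
    split_ifs
    · exact dominatesAfter_geomSeries_mul (hu 0) (hu j) (hn j) (c j)
    · simpa only [mul_one] using dominatesAfter_geomSeries (hu 0) (hu j) (c j)
  cases K with
  | zero => simp
  | succ K =>
    rw [Finset.prod_range_succ', Finset.prod_range_succ']
    refine (DominatesAfter.prod _ fun j _ => hdom (j + 1)).mul_sub_mul_mem ?_ ?_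
    · split_ifs
      exacts [geomSeries_mem_nonnegCoeff R _, one_mem _]
    · rw [show u 0 + c 0 * u 0 = (c 0 + 1) * u 0 by ring]
      split_ifs
      · exact geomSeries_mul_sub_mem_of_coprime R (hn 0) (c 0).succ_pos (hu 0) hnc
      · simpa only [mul_one] using geomSeries_sub_mem_of_dvd R (Dvd.intro_left (c 0 + 1) rfl)

end BerkovichGrizzell

open BerkovichGrizzell in
theorem berkovich_grizzell_two_moduli_general {𝕜 : Type*} [Field 𝕜] [PartialOrder 𝕜]
    [IsOrderedRing 𝕜] {n u c : ℕ → ℕ} {K L : ℕ} (hn : ∀ j, 0 < n j) (hu : ∀ j, 0 < u j)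
    (hnc : (n 0).Coprime (c 0 + 1)) (hKL : L ≤ K) (k : ℕ) :
    0 ≤ coeff k
      (((∏ j ∈ Finset.range K, (1 - (X : 𝕜⟦X⟧) ^ u j)) *
          ∏ j ∈ Finset.range L, (1 - X ^ (n j * (u j + c j * u 0))))⁻¹ -
        ((∏ j ∈ Finset.range K, (1 - X ^ (u j + c j * u 0))) *
          ∏ j ∈ Finset.range L, (1 - X ^ (n j * u j)))⁻¹) := by
  have hv (j : ℕ) : 0 < u j + c j * u 0 := Nat.add_pos_left (hu j) _
  rw [PowerSeries.mul_inv_rev, PowerSeries.mul_inv_rev,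
    prod_one_sub_X_pow_inv _ fun j _ => hu j, prod_one_sub_X_pow_inv _ fun j _ => hv j,
    prod_one_sub_X_pow_inv _ fun j _ => Nat.mul_pos (hn j) (hu j),
    prod_one_sub_X_pow_inv _ fun j _ => Nat.mul_pos (hn j) (hv j),
    mul_comm, mul_comm (∏ j ∈ Finset.range L, geomSeries 𝕜 (n j * u j))]
  exact prod_geomSeries_sub_mem_nonnegCoeff 𝕜 hn hu hnc hKL k

theorem berkovich_grizzell_two_moduli (m n y z : ℕ) (K L : ℕ)
    (hm : 0 < m) (hn : 0 < n) (hy : 0 < y) (hz : 0 < z)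
    (hny : Nat.Coprime n y) (hKL : L ≤ K) (k : ℕ) :
    0 ≤ PowerSeries.coeff (R := ℚ) k
      (((∏ j ∈ Finset.range K,
          (1 - (PowerSeries.X : PowerSeries ℚ) ^ (z + j * m))) *
        (∏ j ∈ Finset.range L,
          (1 - (PowerSeries.X : PowerSeries ℚ) ^ (n * y * z + j * (n * m)))))⁻¹ -
       ((∏ j ∈ Finset.range K,
          (1 - (PowerSeries.X : PowerSeries ℚ) ^ (y * z + j * m))) *
        (∏ j ∈ Finset.range L,
          (1 - (PowerSeries.X : PowerSeries ℚ) ^ (n * z + j * (n * m)))))⁻¹) := by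
  obtain ⟨c, rfl⟩ := Nat.exists_eq_add_of_le' hy
  refine (berkovich_grizzell_two_moduli_general (𝕜 := ℚ) (n := fun _ => n)
    (u := fun j => z + j * m) (c := fun _ => c) (fun _ => hn) (fun j => Nat.add_pos_left hz _)
    hny hKL k).trans_eq ?_
  congr! 7 <;> ring
end
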